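/- arXiv:1608.08443 — 5 statements merged into one kernel-verified Lean document; each statement's English description precedes it below -/
import Mathlib

section
/- Let s ∈ (0,1), let (a,b) be a bounded open interval, and let u ∈ C²₀(a,b) be such that |u'| is integrable on (a,b). Fix x ∈ ℝ with x ∉ {a,b}. Then the limit defining (−Δ)^s u(x) exists and: (i) if s ≠ 1/2, the function F(x) = ∫_a^b |x−y|^{1−2s} u'(y) dy is differentiable at x and (−Δ)^s u(x) = C_s F'(x); (ii) if s = 1/2, the function G(x) = ∫_a^b ln|x−y| u'(y) dy is differentiable at x and (−Δ)^{1/2} u(x) = (1/π) G'(x). -/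
open MeasureTheory Filter Set

/-- The normalization constant `C₁(s) = 2^{2s} s Γ(s+1/2) / (√π Γ(1−s))`. -/
noncomputable def C1 (s : ℝ) : ℝ :=
  2 ^ (2 * s) * s * Real.Gamma (s + 1 / 2) / (Real.sqrt Real.pi * Real.Gamma (1 - s))

/-- The constant `C_s = C₁(s)/(2s(1−2s))`. -/
noncomputable def Cs (s : ℝ) : ℝ := C1 s / (2 * s * (1 - 2 * s))

/-- `HasFracLap s u x V` means the limit defining `(−Δ)^s u (x)` exists and equals `V`. -/
def HasFracLap (s : ℝ) (u : ℝ → ℝ) (x V : ℝ) : Prop :=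
  Filter.Tendsto
    (fun ε : ℝ => C1 s * ∫ y in {y : ℝ | ε ≤ |y|}, (u x - u (x - y)) * |y| ^ (-1 - 2 * s))
    (nhdsWithin 0 (Set.Ioi 0)) (nhds V)

open Topology

lemma symm_split {f : ℝ → ℝ} {ε R : ℝ} (h0 : 0 ≤ ε) (hR : ε ≤ R)
    (hf : IntegrableOn f {y : ℝ | ε ≤ |y|}) :
    ∫ y in {y : ℝ | ε ≤ |y|}, f y =
      (∫ y in ε..R, (f y + f (-y))) + ∫ y in Ioi R, (f y + f (-y)) := by
  have hset : {y : ℝ | ε ≤ |y|} = Iic (-ε) ∪ Ici ε := by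
    ext y; simp only [mem_ofPred_eq, mem_union, mem_Iic, mem_Ici, le_abs]
    constructor
    · rintro (h | h)
      · right; exact h
      · left; linarith
    · rintro (h | h)
      · right; linarith
      · left; exact h
  have hae : (Iic (-ε) ∪ Ici ε : Set ℝ) =ᵐ[volume] (Iic (-ε) ∪ Ioi ε : Set ℝ) :=
    (ae_eq_refl _).union Ioi_ae_eq_Ici.symm
  rw [hset] at hf ⊢
  have h1 : IntegrableOn f (Iic (-ε)) := hf.mono_set subset_union_left
  have h2 : IntegrableOn f (Ioi ε) :=
    hf.mono_set (Ioi_subset_Ici_self.trans subset_union_right)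
  have h3 : IntegrableOn (fun y => f (-y)) (Ioi ε) := by
    have := h1.comp_neg
    simpa using this.mono_set (by intro y hy; simp at hy ⊢; linarith)
  rw [setIntegral_congr_set hae, setIntegral_union _ measurableSet_Ioi h1 h2,
    ← integral_comp_neg_Ioi, add_comm, ← integral_add h2 h3]
  · have h4 := h2.add h3
    rw [intervalIntegral.integral_of_le hR, ← setIntegral_union _ measurableSet_Ioi]
    · rw [Ioc_union_Ioi_eq_Ioi hR]
    · exact h4.mono_set (Ioc_subset_Ioi_self)
    · exact h4.mono_set (Ioi_subset_Ioi hR)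
    · exact Ioc_disjoint_Ioi le_rfl
  · rw [Set.disjoint_left]; intro y hy hy2; simp at hy hy2; linarith

lemma symm_split_univ {f : ℝ → ℝ} {R : ℝ} (hR : 0 ≤ R) (hf : Integrable f)
    (hz : ∀ y, R < |y| → f y = 0) :
    ∫ y, f y = ∫ y in (0:ℝ)..R, (f y + f (-y)) := by
  have hset : {y : ℝ | 0 ≤ |y|} = univ := by ext y; simp
  have := symm_split (f := f) le_rfl hR (by rw [hset]; exact hf.integrableOn)
  rw [hset, setIntegral_univ] at this
  rw [this, setIntegral_congr_fun (g := fun _ => (0:ℝ)) measurableSet_Ioi]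
  · simp
  · intro y hy
    have hy' : R < y := hy
    have : 0 < y := lt_of_le_of_lt hR hy'
    simp only
    rw [hz y (by rwa [abs_of_pos this]), hz (-y) (by rwa [abs_neg, abs_of_pos this])]; simp

structure Ker (K k : ℝ → ℝ) : Prop where
  deriv : ∀ z, z ≠ 0 → HasDerivAt K (k z) z
  even : ∀ z, K (-z) = K z
  odd : ∀ z, k (-z) = - k z
  cont : ContinuousOn k {0}ᶜ
  meas : Measurable K
  measd : Measurable k
  loc : LocallyIntegrable K
  lim : Tendsto (fun ε => ε * K ε) (𝓝[>] 0) (𝓝 0)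

lemma Ker.integrable {K k v : ℝ → ℝ} (hK : Ker K k) (hv : Continuous v)
    (hc : HasCompactSupport v) (t : ℝ) : Integrable (fun z => K z * v (t - z)) := by
  have := hc.convolutionExists_right (ContinuousLinearMap.mul ℝ ℝ) hK.loc hv t
  simpa [ConvolutionExistsAt] using this

lemma Ker.integrable' {K k v : ℝ → ℝ} (hK : Ker K k) (hv : Continuous v)
    (hc : HasCompactSupport v) (t : ℝ) : Integrable (fun y => K (t - y) * v y) := by
  have := (hK.integrable hv hc t).comp_sub_left t
  simpa using this

lemma smooth_deriv {K k v : ℝ → ℝ} (hK : Ker K k) (hv : ContDiff ℝ 1 v)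
    (hc : HasCompactSupport v) (x : ℝ) :
    HasDerivAt (fun t => ∫ y, K (t - y) * v y) (∫ z, K z * deriv v (x - z)) x := by
  have := hc.hasDerivAt_convolution_right (ContinuousLinearMap.mul ℝ ℝ) hK.loc hv x
  simp only [convolution_def] at this
  convert! this using 1
  ext t
  rw [convolution_def, ← integral_sub_left_eq_self _ volume t]
  simp

lemma smooth_lim {K k v : ℝ → ℝ} (hK : Ker K k) (hv : ContDiff ℝ 1 v)
    (hc : HasCompactSupport v) (x R : ℝ) (hR : 0 < R) (hz : ∀ y, R ≤ |x - y| → v y = 0) :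
    Tendsto (fun ε => ∫ z in ε..R, k z * (v (x - z) - v (x + z))) (𝓝[>] 0)
      (𝓝 (∫ z, K z * deriv v (x - z))) := by
  have hv' : Continuous (deriv v) := hv.continuous_deriv le_rfl
  have hd : ∀ y, HasDerivAt v (deriv v y) y := fun y =>
    (hv.differentiable (by norm_num) y).hasDerivAt
  have hz' : ∀ y, R < |x - y| → deriv v y = 0 := by
    intro y hy
    have : v =ᶠ[𝓝 y] fun _ => 0 := by
      have : ∀ᶠ w in 𝓝 y, R < |x - w| :=
        (by fun_prop : Continuous fun w => |x - w|).continuousAt.eventually (lt_mem_nhds hy)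
      filter_upwards [this] with w hw using hz w hw.le
    rw [this.deriv_eq]; simp
  have hint := hK.integrable hv' hc.deriv x
  rw [symm_split_univ hR.le hint (fun y hy => by simp [hz' (x - y) (by simpa using hy)])]
  have hint2 : Integrable (fun y => K y * deriv v (x - y) + K (-y) * deriv v (x - -y)) :=
    hint.add hint.comp_neg
  have hcont := intervalIntegral.continuousOn_primitive_interval_left (a := 0) (b := R) (μ := volume)
    hint2.integrableOn
  have h1 : Tendsto (fun ε => ∫ y in ε..R,
      (K y * deriv v (x - y) + K (-y) * deriv v (x - -y))) (𝓝[>] 0)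
      (𝓝 (∫ y in (0:ℝ)..R, (K y * deriv v (x - y) + K (-y) * deriv v (x - -y)))) := by
    have := hcont 0 (by simp)
    rw [ContinuousWithinAt] at this
    refine this.mono_left ?_
    rw [uIcc_of_le hR.le]
    have : 𝓝[>] (0:ℝ) = 𝓝[Ioc 0 R] 0 := (nhdsWithin_Ioc_eq_nhdsGT hR).symm
    rw [this]
    exact nhdsWithin_mono _ Ioc_subset_Icc_self
  have h2 : Tendsto (fun ε => K ε * (v (x - ε) - v (x + ε))) (𝓝[>] 0) (𝓝 0) := by
    have hd1 : HasDerivAt (fun e => v (x - e) - v (x + e)) (-deriv v x - deriv v x) 0 := by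
      have a1 : HasDerivAt (fun e => v (x - e)) (-deriv v x) 0 := by
        have := HasDerivAt.comp_const_sub x 0 (f := v) (f' := deriv v x) (by simpa using hd x)
        exact this
      have a2 : HasDerivAt (fun e => v (x + e)) (deriv v x) 0 := by
        have := HasDerivAt.comp_const_add x 0 (f := v) (f' := deriv v x) (by simpa using hd x)
        exact this
      exact a1.sub a2
    have h3 := (hasDerivAt_iff_tendsto_slope.1 hd1).mono_left
      (nhdsWithin_mono (0:ℝ) (fun y (hy : 0 < y) => hy.ne'))
    have := hK.lim.mul h3
    rw [zero_mul] at this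
    refine this.congr' ?_
    filter_upwards [self_mem_nhdsWithin] with e he
    have : e ≠ 0 := ne_of_gt he
    simp [slope_def_field]
    field_simp
  have h4 := h2.neg.add h1
  rw [neg_zero, zero_add] at h4
  refine h4.congr' ?_
  filter_upwards [Ioo_mem_nhdsGT hR] with e he
  have hpos : ∀ z ∈ uIcc e R, z ≠ 0 := by
    intro z hz; rw [uIcc_of_le he.2.le] at hz; exact (lt_of_lt_of_le he.1 hz.1).ne'
  have ibp := intervalIntegral.integral_mul_deriv_eq_deriv_mul (a := e) (b := R)
    (u := fun z => v (x - z) - v (x + z)) (v := K)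
    (u' := fun z => -deriv v (x - z) - deriv v (x + z)) (v' := k)
    (fun z hz => by
      exact ((hd (x - z)).comp_const_sub x z).sub ((hd (x + z)).comp_const_add x z))
    (fun z hz => hK.deriv z (hpos z hz))
    (Continuous.intervalIntegrable (by fun_prop) _ _)
    ((hK.cont.mono (fun z hz => hpos z hz)).intervalIntegrable)
  have e1 : ∫ z in e..R, k z * (v (x - z) - v (x + z)) =
    ∫ z in e..R, (v (x - z) - v (x + z)) * k z := by congr 1; ext z; ring
  rw [e1, ibp, hz (x - R) (by simp [abs_of_pos hR]), hz (x + R) (by simp [abs_of_pos hR])]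
  have e2 : ∫ z in e..R, (-deriv v (x - z) - deriv v (x + z)) * K z =
     - ∫ y in e..R, (K y * deriv v (x - y) + K (-y) * deriv v (x - -y)) := by
    rw [← intervalIntegral.integral_neg]; congr 1; ext z; rw [hK.even]; simp only [sub_neg_eq_add]; ring
  rw [e2]; ring

lemma far_part {K k v : ℝ → ℝ} (hK : Ker K k) (hv : Integrable v) (x r R : ℝ) (hr : 0 < r)
    (hR : 0 < R)
    (hz : ∀ y, R ≤ |x - y| → v y = 0) (hz2 : ∀ y, |x - y| < r → v y = 0) :
    (∀ t, |t - x| < r / 2 → Integrable (fun y => K (t - y) * v y)) ∧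
    HasDerivAt (fun t => ∫ y, K (t - y) * v y) (∫ y, k (x - y) * v y) x ∧
    Tendsto (fun ε => ∫ z in ε..R, k z * (v (x - z) - v (x + z))) (𝓝[>] 0)
      (𝓝 (∫ y, k (x - y) * v y)) := by
  set S : Set ℝ := {z | r / 2 ≤ |z| ∧ |z| ≤ R + r} with hS
  have hScpt : IsCompact S := by
    refine IsCompact.of_isClosed_subset (isCompact_closedBall (0:ℝ) (R + r)) ?_ ?_
    · exact (isClosed_le continuous_const continuous_abs).inter
        (isClosed_le continuous_abs continuous_const)
    · intro z hz; simpa using hz.2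
  have hS0 : S ⊆ {0}ᶜ := by
    intro z hz h0
    have h0 : z = 0 := h0
    subst h0; have := hz.1; simp at this; linarith
  obtain ⟨C, hC⟩ := hScpt.exists_bound_of_continuousOn (hK.cont.mono hS0)
  obtain ⟨D, hD⟩ := hScpt.exists_bound_of_continuousOn (f := K)
    (fun z hz => (hK.deriv z (hS0 hz)).continuousAt.continuousWithinAt)
  have hmem : ∀ t y, |t - x| < r / 2 → v y ≠ 0 → t - y ∈ S := by
    intro t y ht hy
    have a1 : r ≤ |x - y| := by by_contra h; exact hy (hz2 y (not_le.1 h))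
    have a2 : |x - y| < R := by by_contra h; exact hy (hz y (not_lt.1 h))
    have a3 : |t - y| ≤ |t - x| + |x - y| := abs_sub_le t x y
    have a4 : |x - y| ≤ |x - t| + |t - y| := abs_sub_le x t y
    rw [abs_sub_comm x t] at a4
    exact ⟨by linarith, by linarith⟩
  have hI : ∀ t, |t - x| < r / 2 → Integrable (fun y => K (t - y) * v y) := by
    intro t ht
    refine (hv.norm.const_mul D).mono' ?_ ?_
    · exact ((hK.meas.comp (measurable_const.sub measurable_id)).aestronglyMeasurable).mul
        hv.aestronglyMeasurable
    · refine Eventually.of_forall fun y => ?_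
      by_cases hy : v y = 0
      · simp [hy]
      · rw [norm_mul]; exact mul_le_mul_of_nonneg_right (hD _ (hmem t y ht hy)) (norm_nonneg _)
  have hx : |x - x| < r / 2 := by simp; exact hr
  have key := hasDerivAt_integral_of_dominated_loc_of_deriv_le (μ := volume) (𝕜 := ℝ)
    (F := fun t y => K (t - y) * v y) (F' := fun t y => k (t - y) * v y) (x₀ := x)
    (s := Metric.ball x (r / 2)) (bound := fun y => C * ‖v y‖)
    (Metric.ball_mem_nhds _ (by positivity))
    (by
      refine Eventually.of_forall fun t => ?_
      exact ((hK.meas.comp (measurable_const.sub measurable_id)).aestronglyMeasurable).mul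
        hv.aestronglyMeasurable)
    (hI x hx)
    (((hK.measd.comp (measurable_const.sub measurable_id)).aestronglyMeasurable).mul
        hv.aestronglyMeasurable)
    (by
      refine Eventually.of_forall fun y t ht => ?_
      by_cases hy : v y = 0
      · simp [hy]
      · rw [norm_mul]
        exact mul_le_mul_of_nonneg_right
          (hC _ (hmem t y (by simpa [Real.dist_eq] using ht) hy)) (norm_nonneg _))
    (hv.norm.const_mul C)
    (by
      refine Eventually.of_forall fun y t ht => ?_
      by_cases hy : v y = 0
      · simp only [hy, mul_zero]; exact hasDerivAt_const _ _
      · have := hmem t y (by simpa [Real.dist_eq] using ht) hy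
        exact ((hK.deriv _ (hS0 this)).comp_sub_const t y).mul_const _)
  refine ⟨hI, key.2, ?_⟩
  refine tendsto_const_nhds.congr' ?_
  filter_upwards [Ioo_mem_nhdsGT (lt_min hr hR)] with e he
  have her : e < r := lt_of_lt_of_le he.2 (min_le_left _ _)
  have heR : e < R := lt_of_lt_of_le he.2 (min_le_right _ _)
  have hint : Integrable (fun z => k z * v (x - z)) := by
    simpa using key.1.comp_sub_left x
  rw [← integral_sub_left_eq_self _ volume x]
  simp only [sub_sub_cancel]
  rw [symm_split_univ hR.le hint (fun y hy => by simp [hz (x - y) (by simpa using hy.le)])]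
  have hint2 : Integrable (fun y => k y * v (x - y) + k (-y) * v (x - -y)) :=
    hint.add hint.comp_neg
  rw [← intervalIntegral.integral_add_adjacent_intervals (b := e) hint2.intervalIntegrable
    hint2.intervalIntegrable]
  have : ∫ y in (0:ℝ)..e, (k y * v (x - y) + k (-y) * v (x - -y)) = ∫ y in (0:ℝ)..e, (0:ℝ) := by
    apply intervalIntegral.integral_congr
    intro z hz
    rw [uIcc_of_le he.1.le] at hz
    have : |z| < r := by rw [abs_of_nonneg hz.1]; linarith [hz.2]
    simp only
    rw [hz2 (x - z) (by simpa), hz2 (x - -z) (by simpa)]; simp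
  rw [this]
  simp only [intervalIntegral.integral_zero, zero_add]
  apply intervalIntegral.integral_congr
  intro z _
  simp only [hK.odd, sub_neg_eq_add]; ring

lemma lemmaA {K k v : ℝ → ℝ} (hK : Ker K k) (hv : Integrable v) (x δ R : ℝ) (hδ : 0 < δ)
    (hR : 0 < R) (hz : ∀ y, R ≤ |x - y| → v y = 0)
    (hC : ContDiffOn ℝ 1 v (Metric.ball x δ)) :
    ∃ F', HasDerivAt (fun t => ∫ y, K (t - y) * v y) F' x ∧
      Tendsto (fun ε => ∫ z in ε..R, k z * (v (x - z) - v (x + z))) (𝓝[>] 0) (𝓝 F') := by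
  let χ : ContDiffBump x := ⟨δ / 4, δ / 2, by positivity, by linarith⟩
  set v1 : ℝ → ℝ := fun y => χ y * v y with hv1
  set v2 : ℝ → ℝ := fun y => v y - v1 y with hv2
  have hc1 : HasCompactSupport v1 := χ.hasCompactSupport.mul_right
  have hts : tsupport v1 ⊆ Metric.closedBall x (δ / 2) := by
    have := χ.tsupport_eq
    exact (tsupport_mul_subset_left).trans this.subset
  have hC1 : ContDiff ℝ 1 v1 := by
    rw [contDiff_iff_contDiffAt]
    intro y
    by_cases hy : y ∈ Metric.ball x δ
    · exact χ.contDiffAt.mul (hC.contDiffAt (Metric.isOpen_ball.mem_nhds hy))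
    · have hy2 : y ∉ tsupport v1 := fun h => hy
        (Metric.closedBall_subset_ball (by linarith) (hts h))
      have : v1 =ᶠ[𝓝 y] fun _ => 0 := by
        have := notMem_tsupport_iff_eventuallyEq.1 hy2
        exact this
      exact contDiffAt_const.congr_of_eventuallyEq this
  have hi1 : Integrable v1 := hC1.continuous.integrable_of_hasCompactSupport hc1
  have hi2 : Integrable v2 := hv.sub hi1
  have hz1 : ∀ y, R ≤ |x - y| → v1 y = 0 := fun y hy => by simp [hv1, hz y hy]
  have hz2 : ∀ y, R ≤ |x - y| → v2 y = 0 := fun y hy => by simp [hv2, hz y hy, hz1 y hy]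
  have hz3 : ∀ y, |x - y| < δ / 4 → v2 y = 0 := by
    intro y hy
    have : χ y = 1 := χ.one_of_mem_closedBall (by
      rw [Metric.mem_closedBall, Real.dist_eq, abs_sub_comm]; exact hy.le)
    simp [hv2, hv1, this]
  obtain ⟨f1, f2, f3⟩ := far_part hK hi2 x (δ / 4) R (by positivity) hR hz2 hz3
  have g2 := smooth_deriv hK hC1 hc1 x
  have g3 := smooth_lim hK hC1 hc1 x R hR hz1
  refine ⟨_, (g2.add f2).congr_of_eventuallyEq ?_, (g3.add f3).congr' ?_⟩
  · filter_upwards [Metric.ball_mem_nhds x (by positivity : 0 < δ / 4 / 2)] with t ht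
    simp only [Pi.add_apply]
    rw [← integral_add (hK.integrable' hC1.continuous hc1 t)
      (f1 t (by simpa [Real.dist_eq] using ht))]
    congr 1; ext y; simp only [hv2]; ring
  · filter_upwards [Ioo_mem_nhdsGT hR] with e he
    have hkc : ContinuousOn k (uIcc e R) := by
      refine hK.cont.mono fun z hz => ?_
      rw [uIcc_of_le he.2.le] at hz; exact (lt_of_lt_of_le he.1 hz.1).ne'
    have aux : ∀ w : ℝ → ℝ, Integrable w → IntervalIntegrable
        (fun z => k z * (w (x - z) - w (x + z))) volume e R := fun w hw =>
      ((((hw.comp_sub_left x).sub (hw.comp_add_left x)).intervalIntegrable)).continuousOn_mul hkc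
    rw [← intervalIntegral.integral_add (aux v1 hi1) (aux v2 hi2)]
    congr 1; ext z; simp only [hv2]; ring

lemma ker_pow {p : ℝ} (hp : -1 < p) :
    Ker (fun z => |z| ^ p) (fun z => p * (z * |z| ^ (p - 2))) where
  deriv := by
    intro z hz
    have hz' : 0 < |z| := abs_pos.2 hz
    have := (hasDerivAt_abs hz).rpow_const (p := p) (Or.inl hz'.ne')
    convert this using 1
    have e : |z| ^ (p - 1) = |z| ^ (p - 2) * |z| := by
      rw [← Real.rpow_add_one hz'.ne']; congr 1; ring
    rw [e]
    have e2 : (SignType.sign z : ℝ) * |z| = z := sign_mul_abs z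
    linear_combination (-p * |z| ^ (p - 2)) * e2
  even := by intro z; simp
  odd := by intro z; simp only [abs_neg]; ring
  cont := by
    refine continuousOn_const.mul (continuousOn_id.mul ?_)
    exact continuous_abs.continuousOn.rpow_const (fun z hz => Or.inl (abs_ne_zero.2 hz))
  meas := by fun_prop
  measd := by fun_prop
  loc := by
    refine locallyIntegrable_of_norm_le_rpow (C := 1) (α := -p) (by simp) (by simp; linarith) ?_
      (by fun_prop : Measurable fun z : ℝ => |z| ^ p).aestronglyMeasurable
    refine Eventually.of_forall fun z => ?_
    simp [abs_of_nonneg (Real.rpow_nonneg (abs_nonneg z) p)]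
  lim := by
    have h : Tendsto (fun e : ℝ => e ^ (p + 1)) (𝓝[>] 0) (𝓝 0) := by
      have := (Real.continuousAt_rpow_const 0 (p + 1) (Or.inr (by linarith))).tendsto
      rw [Real.zero_rpow (by linarith)] at this
      exact this.mono_left nhdsWithin_le_nhds
    refine h.congr' ?_
    filter_upwards [self_mem_nhdsWithin] with e he
    have he : 0 < e := he
    rw [abs_of_pos he, Real.rpow_add_one he.ne']; ring

lemma ker_log : Ker (fun z => Real.log |z|) (fun z => 1 * (z * |z| ^ (-2 : ℝ))) where
  deriv := by
    intro z hz
    simp only [Real.log_abs]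
    convert Real.hasDerivAt_log hz using 1
    have : |z| ^ (-2 : ℝ) = (z ^ 2)⁻¹ := by
      rw [Real.rpow_neg (abs_nonneg z), ← sq_abs z]; norm_cast
    rw [this]; field_simp
  even := by intro z; simp
  odd := by intro z; simp only [abs_neg]; ring
  cont := by
    refine continuousOn_const.mul (continuousOn_id.mul ?_)
    exact continuous_abs.continuousOn.rpow_const (fun z hz => Or.inl (abs_ne_zero.2 hz))
  meas := by fun_prop
  measd := by fun_prop
  loc := by
    simp only [Real.log_abs]
    rw [locallyIntegrable_iff]
    intro S hS
    obtain ⟨R, hR, hSR⟩ := hS.isBounded.exists_pos_norm_le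
    have h : IntegrableOn Real.log (Icc (-R) R) := by
      rw [← intervalIntegrable_iff_integrableOn_Icc_of_le (by linarith)]
      exact intervalIntegral.intervalIntegrable_log'
    exact h.mono_set (fun z hz => abs_le.1 (hSR z hz))
  lim := by
    have h := tendsto_log_mul_rpow_nhdsGT_zero (r := 1) one_pos
    refine h.congr fun e => ?_
    simp [mul_comm]

lemma lemmaB {s c : ℝ} (hs : 0 < s) (hs1 : s < 1) (hc : c ≠ 0) {u v : ℝ → ℝ} (hu : Continuous u)
    (hv : Integrable v) (x δ R : ℝ) (hδ : 0 < δ) (hR : 0 < R)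
    (hz : ∀ y, R ≤ |x - y| → u y = 0)
    {N : Set ℝ} (hN : N.Countable) (hd : ∀ y, y ∉ N → HasDerivAt u (v y) y)
    (hdl : ∀ y ∈ Metric.ball x δ, HasDerivAt u (v y) y)
    (hC : ContDiffOn ℝ 1 v (Metric.ball x δ)) {F' : ℝ}
    (hF : Tendsto (fun ε => ∫ z in ε..R, (c * (z * |z| ^ (-1 - 2 * s))) * (v (x - z) - v (x + z)))
      (𝓝[>] 0) (𝓝 F')) :
    HasFracLap s u x (C1 s / (2 * s * c) * F') := by
  set w : ℝ → ℝ := fun z => 2 * u x - u (x - z) - u (x + z) with hw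
  have hwc : Continuous w := by fun_prop
  have hwd : ∀ z, HasDerivAt u (v (x - z)) (x - z) → HasDerivAt u (v (x + z)) (x + z) →
      HasDerivAt w (v (x - z) - v (x + z)) z := by
    intro z h1 h2
    have := ((h1.comp_const_sub x z).const_sub (2 * u x)).sub (h2.comp_const_add x z)
    rw [neg_neg] at this
    exact this
  -- the boundary term
  have hbd : Tendsto (fun e => w e * e ^ (-2 * s)) (𝓝[>] 0) (𝓝 0) := by
    have hdv : HasDerivAt v (deriv v x) x :=
      ((hC.contDiffAt (Metric.ball_mem_nhds x hδ)).differentiableAt (by norm_num)).hasDerivAt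
    have hd1 : HasDerivAt (fun e => v (x - e) - v (x + e)) (-deriv v x - deriv v x) 0 := by
      have a1 : HasDerivAt (fun e => v (x - e)) (-deriv v x) 0 :=
        HasDerivAt.comp_const_sub x 0 (f := v) (f' := deriv v x) (by simpa using hdv)
      have a2 : HasDerivAt (fun e => v (x + e)) (deriv v x) 0 :=
        HasDerivAt.comp_const_add x 0 (f := v) (f' := deriv v x) (by simpa using hdv)
      exact a1.sub a2
    obtain ⟨C, hC0, hCb⟩ := hd1.isBigO_sub.exists_nonneg
    rw [Asymptotics.isBigOWith_iff] at hCb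
    obtain ⟨η, hη, hb⟩ := Metric.eventually_nhds_iff.1 hCb
    have hlim : Tendsto (fun e : ℝ => C * e ^ (2 - 2 * s)) (𝓝[>] 0) (𝓝 0) := by
      have := (Real.continuousAt_rpow_const 0 (2 - 2 * s) (Or.inr (by linarith))).tendsto
      rw [Real.zero_rpow (by linarith)] at this
      simpa using (this.mono_left nhdsWithin_le_nhds).const_mul C
    refine squeeze_zero_norm' ?_ hlim
    filter_upwards [Ioo_mem_nhdsGT (lt_min hη hδ)] with e he
    have heη : e < η := lt_of_lt_of_le he.2 (min_le_left _ _)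
    have heδ : e < δ := lt_of_lt_of_le he.2 (min_le_right _ _)
    have he0 : 0 < e := he.1
    have hest : ‖w e - w 0‖ ≤ (C * e) * ‖e - 0‖ := by
      refine Convex.norm_image_sub_le_of_norm_hasDerivWithin_le (𝕜 := ℝ) (s := Icc 0 e)
        (f' := fun z => v (x - z) - v (x + z)) ?_ ?_ (convex_Icc 0 e)
        (left_mem_Icc.2 he0.le) (right_mem_Icc.2 he0.le)
      · intro z hz
        have : |z| < δ := by rw [abs_of_nonneg hz.1]; linarith [hz.2]
        exact (hwd z (hdl _ (by simpa [Real.dist_eq] using this))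
          (hdl _ (by simpa [Real.dist_eq] using this))).hasDerivWithinAt
      · intro z hz
        have h1 : |z| ≤ e := by rw [abs_of_nonneg hz.1]; exact hz.2
        have := hb (y := z) (by simp; linarith)
        simp at this
        rw [Real.norm_eq_abs]
        exact this.trans (mul_le_mul_of_nonneg_left h1 hC0)
    have hw0 : w 0 = 0 := by simp [hw]; ring
    rw [hw0, sub_zero, sub_zero, Real.norm_of_nonneg he0.le] at hest
    rw [norm_mul, Real.norm_of_nonneg (Real.rpow_nonneg he0.le _)]
    calc ‖w e‖ * e ^ (-2 * s) ≤ (C * e * e) * e ^ (-2 * s) := by gcongr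
      _ = C * e ^ (2 - 2 * s) := by
        rw [show (2 - 2 * s) = (-2 * s) + 1 + 1 by ring, Real.rpow_add_one he0.ne',
          Real.rpow_add_one he0.ne']; ring
  obtain ⟨M, hM⟩ := (isCompact_Icc (a := x - R) (b := x + R)).exists_bound_of_continuousOn
    hu.continuousOn
  have hM' : ∀ y, ‖u y‖ ≤ M := by
    intro y
    by_cases h : R ≤ |x - y|
    · rw [hz y h, norm_zero]
      exact (norm_nonneg _).trans (hM x ⟨by linarith, by linarith⟩)
    · have := abs_lt.1 (not_le.1 h)
      exact hM y ⟨by linarith, by linarith⟩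
  have key : ∀ e ∈ Ioo 0 R,
      ∫ y in {y : ℝ | e ≤ |y|}, (u x - u (x - y)) * |y| ^ (-1 - 2 * s) =
      1 / (2 * s) * (w e * e ^ (-2 * s)) + 1 / (2 * s * c) *
        ∫ z in e..R, (c * (z * |z| ^ (-1 - 2 * s))) * (v (x - z) - v (x + z)) := by
    intro e he
    have he0 : 0 < e := he.1
    have hpi : IntegrableOn (fun y : ℝ => |y| ^ (-1 - 2 * s)) {y : ℝ | e ≤ |y|} := by
      have h1 : IntegrableOn (fun y : ℝ => |y| ^ (-1 - 2 * s)) (Ici e) := by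
        rw [integrableOn_Ici_iff_integrableOn_Ioi]
        refine (integrableOn_Ioi_rpow_of_lt (a := -1 - 2 * s) (by linarith) he0).congr_fun ?_
          measurableSet_Ioi
        intro y hy
        simp only
        rw [abs_of_pos (he0.trans hy)]
      have h2 : IntegrableOn (fun y : ℝ => |y| ^ (-1 - 2 * s)) (Iic (-e)) := by
        have := h1.comp_neg
        simpa using this
      refine (h1.union h2).mono_set ?_
      intro y hy
      have hy : e ≤ |y| := hy
      rcases le_abs.1 hy with h | h
      · left; exact h
      · right; exact (by linarith : y ≤ -e)
    have hfi : IntegrableOn (fun y => (u x - u (x - y)) * |y| ^ (-1 - 2 * s))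
        {y : ℝ | e ≤ |y|} := by
      refine Integrable.bdd_mul (c := M + M) hpi ?_ ?_
      · exact (by fun_prop : Continuous fun y => u x - u (x - y)).aestronglyMeasurable
      · exact Eventually.of_forall fun y => (norm_sub_le _ _).trans (add_le_add (hM' _) (hM' _))
    rw [symm_split he0.le he.2.le hfi]
    have hpos : ∀ z ∈ uIcc e R, 0 < z := by
      intro z hz; rw [uIcc_of_le he.2.le] at hz; exact lt_of_lt_of_le he.1 hz.1
    have tail : ∫ y in Ioi R, ((u x - u (x - y)) * |y| ^ (-1 - 2 * s) +
        (u x - u (x - -y)) * |-y| ^ (-1 - 2 * s)) = 2 * u x * (R ^ (-2 * s) / (2 * s)) := by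
      have : ∫ y in Ioi R, ((u x - u (x - y)) * |y| ^ (-1 - 2 * s) +
        (u x - u (x - -y)) * |-y| ^ (-1 - 2 * s)) = ∫ y in Ioi R, 2 * u x * y ^ (-1 - 2 * s) := by
        refine setIntegral_congr_fun measurableSet_Ioi fun y hy => ?_
        have hy : R < y := hy
        have hy0 : 0 < y := hR.trans hy
        simp only [abs_neg]
        rw [abs_of_pos hy0, hz (x - y) (by simp [abs_of_pos hy0, hy.le]),
          hz (x - -y) (by simp [abs_of_pos hy0, hy.le])]; ring
      rw [this, integral_const_mul, integral_Ioi_rpow_of_lt (by linarith) hR]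
      rw [show -1 - 2 * s + 1 = -2 * s by ring]
      field_simp
    have e1 : ∫ y in e..R, ((u x - u (x - y)) * |y| ^ (-1 - 2 * s) +
        (u x - u (x - -y)) * |-y| ^ (-1 - 2 * s)) = ∫ y in e..R, w y * y ^ (-1 - 2 * s) := by
      refine intervalIntegral.integral_congr fun y hy => ?_
      simp only [abs_neg, sub_neg_eq_add, hw]
      rw [abs_of_pos (hpos y hy)]; ring
    have e2 : ∫ z in e..R, (c * (z * |z| ^ (-1 - 2 * s))) * (v (x - z) - v (x + z)) =
        c * ∫ z in e..R, (v (x - z) - v (x + z)) * z ^ (-2 * s) := by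
      rw [← intervalIntegral.integral_const_mul]
      refine intervalIntegral.integral_congr fun y hy => ?_
      have := hpos y hy
      rw [abs_of_pos this, show -2 * s = (-1 - 2 * s) + 1 by ring, Real.rpow_add_one this.ne']
      ring
    have cr : ∀ q : ℝ, ContinuousOn (fun z : ℝ => z ^ q) (uIcc e R) := fun q =>
      continuousOn_id.rpow_const (fun z hz => Or.inl (hpos z hz).ne')
    have i1 : IntervalIntegrable (fun y => w y * y ^ (-1 - 2 * s)) volume e R :=
      (hwc.continuousOn.mul (cr _)).intervalIntegrable
    have i2 : IntervalIntegrable (fun z => (v (x - z) - v (x + z)) * z ^ (-2 * s)) volume e R :=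
      ((((hv.comp_sub_left x).sub (hv.comp_add_left x)).intervalIntegrable)).mul_continuousOn (cr _)
    have ftc := integral_eq_of_hasDerivAt_off_countable (a := e) (b := R)
      (fun z => w z * z ^ (-2 * s))
      (fun z => (v (x - z) - v (x + z)) * z ^ (-2 * s) + (-2 * s) * (w z * z ^ (-1 - 2 * s)))
      (s := (fun z => x - z) ⁻¹' N ∪ (fun z => x + z) ⁻¹' N)
      ((hN.preimage sub_right_injective).union (hN.preimage (add_right_injective x)))
      (hwc.continuousOn.mul (cr _))
      (by
        intro z hz
        rw [min_eq_left he.2.le, max_eq_right he.2.le] at hz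
        obtain ⟨hz1, hz2⟩ := hz
        rw [mem_union, not_or] at hz2
        have hz0 : 0 < z := he0.trans hz1.1
        have := (hwd z (hd _ hz2.1) (hd _ hz2.2)).mul
          (Real.hasDerivAt_rpow_const (x := z) (p := -2 * s) (Or.inl hz0.ne'))
        convert! this using 1
        rw [show -2 * s - 1 = -1 - 2 * s by ring]; ring)
      (i2.add (i1.const_mul _))
    rw [intervalIntegral.integral_add i2 (i1.const_mul _),
      intervalIntegral.integral_const_mul] at ftc
    have hwR : w R = 2 * u x := by
      simp [hw, hz (x - R) (by simp [abs_of_pos hR]), hz (x + R) (by simp [abs_of_pos hR])]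
    rw [hwR] at ftc
    rw [tail, e1, e2]
    set I1 := ∫ y in e..R, w y * y ^ (-1 - 2 * s)
    set I2 := ∫ z in e..R, (v (x - z) - v (x + z)) * z ^ (-2 * s)
    have hI : I1 = (I2 - 2 * u x * R ^ (-2 * s) + w e * e ^ (-2 * s)) / (2 * s) := by
      rw [eq_div_iff (by positivity)]; linarith
    rw [hI]
    generalize R ^ (-2 * s) = A
    generalize w e * e ^ (-2 * s) = B
    field_simp
    ring
  have hlim := (((hbd.const_mul (1 / (2 * s))).add (hF.const_mul (1 / (2 * s * c)))).const_mul (C1 s))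
  have hval : C1 s * (1 / (2 * s) * 0 + 1 / (2 * s * c) * F') = C1 s / (2 * s * c) * F' := by ring
  rw [hval] at hlim
  refine hlim.congr' ?_
  filter_upwards [Ioo_mem_nhdsGT hR] with e he
  rw [key e he]

lemma C1_half : C1 (1 / 2) = 1 / Real.pi := by
  unfold C1
  rw [show (1:ℝ) - 1 / 2 = 1 / 2 by norm_num, Real.Gamma_one_half_eq,
    Real.mul_self_sqrt Real.pi_pos.le]
  norm_num [Real.Gamma_one]

theorem stmt0 (s a b : ℝ) (hs : s ∈ Set.Ioo (0 : ℝ) 1) (hab : a < b)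
    (u : ℝ → ℝ) (hu_cont : Continuous u)
    (hu_C2 : ContDiffOn ℝ 2 u (Set.Ioo a b))
    (hu_zero : ∀ y, y ∉ Set.Ioo a b → u y = 0)
    (hu_int : MeasureTheory.IntegrableOn (deriv u) (Set.Ioo a b))
    (x : ℝ) (hxa : x ≠ a) (hxb : x ≠ b) :
    (s ≠ 1 / 2 →
      ∃ F' : ℝ,
        HasDerivAt (fun t : ℝ => ∫ y in Set.Ioo a b, |t - y| ^ (1 - 2 * s) * deriv u y) F' x ∧
        HasFracLap s u x (Cs s * F')) ∧
    (s = 1 / 2 →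
      ∃ G' : ℝ,
        HasDerivAt (fun t : ℝ => ∫ y in Set.Ioo a b, Real.log |t - y| * deriv u y) G' x ∧
        HasFracLap s u x ((1 / Real.pi) * G')) := by
  obtain ⟨hs0, hs1⟩ := hs
  set v : ℝ → ℝ := (Ioo a b).indicator (deriv u) with hv
  have hvi : Integrable v := by rwa [hv, integrable_indicator_iff measurableSet_Ioo]
  have hvC : ContDiffOn ℝ 1 v (Ioo a b) := by
    have h1 : ContDiffOn ℝ 1 (deriv u) (Ioo a b) :=
      hu_C2.deriv_of_isOpen isOpen_Ioo (by norm_num)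
    exact h1.congr fun y hy => by simp [hv, hy]
  have hopen : IsOpen ((Icc a b)ᶜ) := isClosed_Icc.isOpen_compl
  have hvC2 : ContDiffOn ℝ 1 v ((Icc a b)ᶜ) :=
    (contDiffOn_const (c := (0:ℝ))).congr fun y hy => by
      have : y ∉ Ioo a b := fun h => hy (Ioo_subset_Icc_self h)
      simp [hv, this]
  have hd1 : ∀ y ∈ Ioo a b, HasDerivAt u (v y) y := by
    intro y hy
    have := ((hu_C2.contDiffAt (isOpen_Ioo.mem_nhds hy)).differentiableAt (by norm_num)).hasDerivAt
    simpa [hv, hy] using this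
  have hd2 : ∀ y ∈ (Icc a b)ᶜ, HasDerivAt u (v y) y := by
    intro y hy
    have h0 : y ∉ Ioo a b := fun h => hy (Ioo_subset_Icc_self h)
    have h1 : v y = 0 := by simp [hv, h0]
    rw [h1]
    refine (hasDerivAt_const y (0:ℝ)).congr_of_eventuallyEq ?_
    filter_upwards [hopen.mem_nhds hy] with z hz
    exact hu_zero z fun h => hz (Ioo_subset_Icc_self h)
  have hcases : ∀ y, y ≠ a → y ≠ b → y ∈ Ioo a b ∨ y ∈ (Icc a b)ᶜ := by
    intro y h1 h2
    by_cases h : y ∈ Icc a b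
    · left; exact ⟨lt_of_le_of_ne h.1 h1.symm, lt_of_le_of_ne h.2 h2⟩
    · right; exact h
  have hd : ∀ y, y ∉ ({a, b} : Set ℝ) → HasDerivAt u (v y) y := by
    intro y hy
    simp only [mem_insert_iff, mem_singleton_iff, not_or] at hy
    rcases hcases y hy.1 hy.2 with h | h
    · exact hd1 y h
    · exact hd2 y h
  have hball : ∃ δ > 0, ContDiffOn ℝ 1 v (Metric.ball x δ) ∧
      ∀ y ∈ Metric.ball x δ, HasDerivAt u (v y) y := by
    rcases hcases x hxa hxb with h | h
    · obtain ⟨δ, hδ, hsub⟩ := Metric.isOpen_iff.1 isOpen_Ioo x h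
      exact ⟨δ, hδ, hvC.mono hsub, fun y hy => hd1 y (hsub hy)⟩
    · obtain ⟨δ, hδ, hsub⟩ := Metric.isOpen_iff.1 hopen x h
      exact ⟨δ, hδ, hvC2.mono hsub, fun y hy => hd2 y (hsub hy)⟩
  obtain ⟨δ, hδ, hC, hdl⟩ := hball
  obtain ⟨R, hR, hout⟩ : ∃ R > 0, ∀ y, R ≤ |x - y| → y ∉ Ioo a b := by
    refine ⟨|x - a| + |x - b| + 1, by positivity, fun y hy h => ?_⟩
    obtain ⟨h1, h2⟩ := h
    have a1 := le_abs_self (x - a)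
    have a2 := neg_abs_le (x - a)
    have a3 := le_abs_self (x - b)
    have a4 := neg_abs_le (x - b)
    rcases le_abs.1 hy with h | h
    · have := abs_nonneg (x - b); linarith
    · have := abs_nonneg (x - a); linarith
  have hzu : ∀ y, R ≤ |x - y| → u y = 0 := fun y hy => hu_zero y (hout y hy)
  have hzv : ∀ y, R ≤ |x - y| → v y = 0 := fun y hy => by simp [hv, hout y hy]
  have hN : ({a, b} : Set ℝ).Countable := (Set.toFinite _).countable
  have hint : ∀ K : ℝ → ℝ, (fun t : ℝ => ∫ y in Set.Ioo a b, K (t - y) * deriv u y) =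
      fun t => ∫ y, K (t - y) * v y := by
    intro K; ext t
    rw [← integral_indicator measurableSet_Ioo]
    congr 1; ext y
    by_cases hy : y ∈ Ioo a b <;> simp [hv, hy]
  constructor
  · intro hs2
    have hc : 1 - 2 * s ≠ 0 := fun h => hs2 (by linarith)
    obtain ⟨F', hF1, hF2⟩ := lemmaA (ker_pow (p := 1 - 2 * s) (by linarith)) hvi x δ R hδ hR hzv hC
    refine ⟨F', ?_, ?_⟩
    · rw [hint (fun z => |z| ^ (1 - 2 * s))]; exact hF1
    · rw [show (1 - 2 * s - 2 : ℝ) = -1 - 2 * s by ring] at hF2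
      exact lemmaB hs0 hs1 hc hu_cont hvi x δ R hδ hR hzu hN hd hdl hC hF2
  · intro hs2
    obtain ⟨F', hF1, hF2⟩ := lemmaA ker_log hvi x δ R hδ hR hzv hC
    refine ⟨F', ?_, ?_⟩
    · rw [hint (fun z => Real.log |z|)]; exact hF1
    · rw [show (-2 : ℝ) = -1 - 2 * s by rw [hs2]; norm_num] at hF2
      have := lemmaB hs0 hs1 one_ne_zero hu_cont hvi x δ R hδ hR hzu hN hd hdl hC hF2
      have e : C1 s / (2 * s * 1) = 1 / Real.pi := by rw [hs2, C1_half]; norm_num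
      rwa [e] at this
end

section
/- Let s ∈ (0,1), let Ω ⊂ ℝ be a finite union of bounded open intervals with pairwise disjoint closures, let v ∈ C¹(Ω) be absolutely integrable over Ω, and let x ∈ Ω. Set Φ_s(y) = |y|^{1−2s}/(1−2s) for s ≠ 1/2 and Φ_s(y) = log|y| for s = 1/2, so that (d/dx)Φ_s(x−y) = sgn(x−y)|x−y|^{−2s}. Then the principal value lim_{ε→0⁺} ∫_{Ω∖(x−ε,x+ε)} sgn(x−y)|x−y|^{−2s} v(y) dy exists, the function G(x) = ∫_Ω Φ_s(x−y) v(y) dy is differentiable at x, and G'(x) = lim_{ε→0⁺} ∫_{Ω∖(x−ε,x+ε)} sgn(x−y)|x−y|^{−2s} v(y) dy. -/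
open MeasureTheory Filter Set

/-- `Φ_s(y) = |y|^{1−2s}/(1−2s)` for `s ≠ 1/2`, and `Φ_{1/2}(y) = log|y|`. -/
noncomputable def Phi (s y : ℝ) : ℝ :=
  if s = 1 / 2 then Real.log |y| else |y| ^ (1 - 2 * s) / (1 - 2 * s)

noncomputable def Ker_s1 (s z : ℝ) : ℝ := Real.sign z * |z| ^ (-(2 * s))

lemma Phi_neg (s z : ℝ) : Phi s (-z) = Phi s z := by simp [Phi]

lemma Phi_hasDerivAt (s z : ℝ) (hz : z ≠ 0) : HasDerivAt (Phi s) (Ker_s1 s z) z := by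
  have hsg : ((SignType.sign z : SignType) : ℝ) = Real.sign z := by
    rcases hz.lt_or_gt with h | h
    · simp [h, Real.sign_of_neg]
    · simp [h, Real.sign_of_pos]
  have habs : HasDerivAt (fun y : ℝ => |y|) (Real.sign z) z := by
    rw [← hsg]; exact hasDerivAt_abs hz
  have hpos : 0 < |z| := abs_pos.2 hz
  by_cases h : s = 1 / 2
  · have h1 := habs.log hpos.ne'
    have : Phi s = fun y => Real.log |y| := by funext y; simp [Phi, h]
    rw [this]
    convert h1 using 1
    rw [Ker_s1, h, show -(2 * (1 / 2 : ℝ)) = -1 by norm_num, Real.rpow_neg_one, div_eq_mul_inv]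
  · have h0 : 1 - 2 * s ≠ 0 := fun h' => h (by linarith)
    have h1 := (habs.rpow_const (p := 1 - 2 * s) (Or.inl hpos.ne')).div_const (1 - 2 * s)
    have : Phi s = fun y => |y| ^ (1 - 2 * s) / (1 - 2 * s) := by funext y; simp only [Phi, h, if_false]
    rw [this]
    refine h1.congr_deriv ?_
    rw [Ker_s1, show 1 - 2 * s - 1 = -(2 * s) by ring]
    field_simp

lemma Phi_measurable (s : ℝ) : Measurable (Phi s) := by
  unfold Phi
  split_ifs
  · fun_prop
  · fun_prop

lemma Ker_measurable (s : ℝ) : Measurable (Ker_s1 s) := by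
  have : Measurable Real.sign := by
    unfold Real.sign
    refine Measurable.ite measurableSet_Iio measurable_const
      (Measurable.ite measurableSet_Ioi measurable_const measurable_const)
  unfold Ker_s1
  fun_prop

lemma Ker_bound (s : ℝ) (hs : 0 < s) (r z : ℝ) (hr : 0 < r) (h : r ≤ |z|) :
    ‖Ker_s1 s z‖ ≤ r ^ (-(2 * s)) := by
  have h1 : |Real.sign z| ≤ 1 := by
    rcases Real.sign_apply_eq z with h | h | h <;> simp [h]
  rw [Ker_s1, norm_mul, Real.norm_eq_abs, Real.norm_eq_abs,
    abs_of_nonneg (Real.rpow_nonneg (abs_nonneg z) _)]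
  have h2 : |z| ^ (-(2 * s)) ≤ r ^ (-(2 * s)) :=
    Real.rpow_le_rpow_of_nonpos hr h (by linarith)
  have h3 := Real.rpow_nonneg (abs_nonneg z) (-(2 * s))
  nlinarith

lemma Phi_locallyIntegrable (s : ℝ) (hs : s < 1) : LocallyIntegrable (Phi s) := by
  have key : ∀ a b : ℝ, IntervalIntegrable (Phi s) volume a b := by
    intro a b
    apply intervalIntegrable_of_even (fun z => (Phi_neg s z).symm)
    intro x hx
    by_cases h : s = 1 / 2
    · have : Phi s = Real.log := by funext y; simp [Phi, h]
      rw [this]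
      exact intervalIntegral.intervalIntegrable_log'
    · have h2 := (intervalIntegral.intervalIntegrable_rpow' (a := 0) (b := x) (r := 1 - 2 * s)
        (by linarith)).div_const (1 - 2 * s)
      refine h2.congr ?_
      intro y hy
      rw [uIoc_of_le hx.le] at hy
      simp only [Phi, h, if_false, abs_of_pos hy.1]
  rw [locallyIntegrable_iff]
  intro k hk
  obtain ⟨R, hR⟩ := hk.isBounded.subset_closedBall 0
  by_cases h0 : 0 ≤ R
  · have := key (-R) R
    rw [intervalIntegrable_iff_integrableOn_Icc_of_le (by linarith)] at this
    refine this.mono_set (hR.trans ?_)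
    rw [Real.closedBall_eq_Icc]; simp
  · have : Metric.closedBall (0:ℝ) R = ∅ := Metric.closedBall_eq_empty.2 (by linarith)
    rw [this] at hR
    rw [subset_empty_iff.1 hR]; simp

lemma Phi_mul_tendsto (s : ℝ) (hs : s < 1) :
    Tendsto (fun e => Phi s e * e) (nhdsWithin 0 (Ioi 0)) (nhds 0) := by
  by_cases h : s = 1 / 2
  · have := tendsto_log_mul_rpow_nhdsGT_zero zero_lt_one
    refine this.congr ?_
    intro x; simp [Phi, h]
  · have h1 : Tendsto (fun e : ℝ => e ^ (2 - 2 * s) / (1 - 2 * s)) (nhdsWithin 0 (Ioi 0)) (nhds 0) := by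
      have : ContinuousAt (fun e : ℝ => e ^ (2 - 2 * s) / (1 - 2 * s)) 0 :=
        (Real.continuousAt_rpow_const _ _ (Or.inr (by linarith))).div_const _
      have h3 := this.tendsto
      rw [Real.zero_rpow (by linarith), zero_div] at h3
      exact h3.mono_left nhdsWithin_le_nhds
    refine h1.congr' ?_
    filter_upwards [self_mem_nhdsWithin] with e he
    have he : 0 < e := he
    simp only [Phi, h, if_false, abs_of_pos he]
    rw [show 2 - 2 * s = (1 - 2 * s) + 1 by ring, Real.rpow_add_one he.ne']
    ring

lemma Phi_mul_integrable (s t r R : ℝ) (hr : 0 < r) (w : ℝ → ℝ) (hw : Integrable w)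
    (h0 : ∀ y, w y ≠ 0 → r ≤ |t - y| ∧ |t - y| ≤ R) :
    Integrable (fun y => Phi s (t - y) * w y) := by
  set S : Set ℝ := {z | r ≤ |z| ∧ |z| ≤ R} with hS
  have hSc : IsClosed S :=
    (isClosed_le continuous_const continuous_abs).inter (isClosed_le continuous_abs continuous_const)
  have hSk : IsCompact S := by
    refine (isCompact_closedBall (0:ℝ) R).of_isClosed_subset hSc ?_
    intro z hz; simpa using hz.2
  have hcont : ContinuousOn (Phi s) S := fun z hz =>
    (Phi_hasDerivAt s z (abs_pos.1 (hr.trans_le hz.1))).continuousAt.continuousWithinAt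
  obtain ⟨C, hC⟩ := hSk.exists_bound_of_continuousOn hcont
  have hm : Measurable (fun y => S.indicator (Phi s) (t - y)) :=
    ((Phi_measurable s).indicator hSc.measurableSet).comp (measurable_const.sub measurable_id)
  have := hw.bdd_mul (c := max C 0) hm.aestronglyMeasurable (ae_of_all _ (fun y => by
    by_cases hy : t - y ∈ S
    · rw [indicator_of_mem hy]; exact (hC _ hy).trans (le_max_left _ _)
    · rw [indicator_of_notMem hy]; simp))
  refine this.congr (ae_of_all _ fun y => ?_)
  by_cases hy : w y = 0
  · simp [hy]
  · have : t - y ∈ S := h0 y hy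
    simp [indicator_of_mem this]

lemma u_exists (s : ℝ) (hs : s < 1) (u : ℝ → ℝ) (hu : Continuous u) (hc : HasCompactSupport u)
    (t : ℝ) : Integrable (fun y => Phi s (t - y) * u y) := by
  have h := (hc.convolutionExists_right (ContinuousLinearMap.mul ℝ ℝ) (Phi_locallyIntegrable s hs) hu) t
  have := h.integrable_swap
  simpa using this

lemma u_deriv (s : ℝ) (hs : s < 1) (u : ℝ → ℝ) (hu : ContDiff ℝ 1 u) (hc : HasCompactSupport u)
    (x : ℝ) : HasDerivAt (fun t => ∫ y, Phi s (t - y) * u y) (∫ y, Phi s (x - y) * deriv u y) x := by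
  have h := hc.hasDerivAt_convolution_right (ContinuousLinearMap.mul ℝ ℝ)
    (Phi_locallyIntegrable s hs) hu x
  rw [convolution_mul_swap] at h
  refine h.congr_of_eventuallyEq (Eventually.of_forall fun t => ?_)
  simp only []
  rw [convolution_mul_swap]

lemma u_pv_eq (s : ℝ) (h0 : 0 < s) (hs : s < 1) (u : ℝ → ℝ) (hu : ContDiff ℝ 1 u)
    (hc : HasCompactSupport u) (x e : ℝ) (he : 0 < e) :
    IntegrableOn (fun y => Ker_s1 s (x - y) * u y) (Ioo (x - e) (x + e))ᶜ ∧
    ∫ y in (Ioo (x - e) (x + e))ᶜ, Ker_s1 s (x - y) * u y =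
      (∫ y in (Ioo (x - e) (x + e))ᶜ, Phi s (x - y) * deriv u y)
        + Phi s e * (u (x + e) - u (x - e)) := by
  set S := (Ioo (x - e) (x + e))ᶜ with hS
  have hSm : MeasurableSet S := measurableSet_Ioo.compl
  have hui : Integrable u := hu.continuous.integrable_of_hasCompactSupport hc
  have hI1 : IntegrableOn (fun y => Ker_s1 s (x - y) * u y) S := by
    refine hui.integrableOn.bdd_mul (c := e ^ (-(2 * s)))
      ((Ker_measurable s).comp (measurable_const.sub measurable_id)).aestronglyMeasurable ?_
    filter_upwards [ae_restrict_mem hSm] with y hy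
    apply Ker_bound s h0 e _ he
    rw [hS, mem_compl_iff, mem_Ioo, not_and_or, not_lt, not_lt] at hy
    rcases hy with hy | hy
    · exact le_trans (by linarith) (le_abs_self _)
    · exact le_trans (by linarith) (neg_le_abs _)
  have hI2 : IntegrableOn (fun y => Phi s (x - y) * deriv u y) S :=
    (u_exists s hs (deriv u) (hu.continuous_deriv le_rfl) hc.deriv x).integrableOn
  refine ⟨hI1, ?_⟩
  set D : ℝ → ℝ := fun y => Phi s (x - y) * deriv u y - Ker_s1 s (x - y) * u y with hD
  have hID : IntegrableOn D S := hI2.sub hI1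
  have hSu : S = Iic (x - e) ∪ Ici (x + e) := by
    ext y; simp [hS]; grind
  have hd : ∀ y, y ≠ x → HasDerivAt (fun y => Phi s (x - y) * u y) (D y) y := by
    intro y hy
    have h1 : HasDerivAt (fun y => Phi s (x - y)) (-Ker_s1 s (x - y)) y := by
      have := (Phi_hasDerivAt s (x - y) (sub_ne_zero.2 hy.symm)).comp y
        ((hasDerivAt_id y).const_sub x)
      simpa [Function.comp_def] using this
    have h2 := h1.mul ((hu.differentiable one_ne_zero y).hasDerivAt)
    refine h2.congr_deriv ?_
    simp only [hD]; ring
  have hz : ∀ᶠ y in cocompact ℝ, Phi s (x - y) * u y = 0 := by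
    have := hc.isCompact.compl_mem_cocompact
    filter_upwards [this] with y hy
    rw [image_eq_zero_of_notMem_tsupport hy, mul_zero]
  have hbot : Tendsto (fun y => Phi s (x - y) * u y) atBot (nhds 0) :=
    tendsto_const_nhds.congr' ((hz.filter_mono atBot_le_cocompact).mono fun y hy => hy.symm)
  have htop : Tendsto (fun y => Phi s (x - y) * u y) atTop (nhds 0) :=
    tendsto_const_nhds.congr' ((hz.filter_mono atTop_le_cocompact).mono fun y hy => hy.symm)
  rw [hSu] at hID
  have e1 := integral_Iic_of_hasDerivAt_of_tendsto' (a := x - e) (m := 0)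
    (fun y hy => hd y (by have : y ≤ x - e := hy; intro h; linarith)) (hID.mono_set subset_union_left) hbot
  have e2 := integral_Ioi_of_hasDerivAt_of_tendsto' (a := x + e) (m := 0)
    (fun y hy => hd y (by have : x + e ≤ y := hy; intro h; linarith))
    ((hID.mono_set subset_union_right).mono_set Ioi_subset_Ici_self) htop
  have e3 : ∫ y in S, D y = (∫ y in Iic (x - e), D y) + ∫ y in Ioi (x + e), D y := by
    rw [hSu, setIntegral_union _ measurableSet_Ici (hID.mono_set subset_union_left)
      (hID.mono_set subset_union_right), integral_Ici_eq_integral_Ioi]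
    rw [Set.disjoint_left]; intro y hy hy'
    have : y ≤ x - e := hy
    have : x + e ≤ y := hy'
    linarith
  have e4 : ∫ y in S, D y = (∫ y in S, Phi s (x - y) * deriv u y) - ∫ y in S, Ker_s1 s (x - y) * u y :=
    integral_sub hI2 hI1
  rw [e1, e2] at e3
  have p1 : x - (x - e) = e := by ring
  have p2 : x - (x + e) = -e := by ring
  rw [p1, p2, Phi_neg] at e3
  linarith

lemma u_pv (s : ℝ) (h0 : 0 < s) (hs : s < 1) (u : ℝ → ℝ) (hu : ContDiff ℝ 1 u)
    (hc : HasCompactSupport u) (x : ℝ) :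
    Tendsto (fun e => ∫ y in (Ioo (x - e) (x + e))ᶜ, Ker_s1 s (x - y) * u y)
      (nhdsWithin 0 (Ioi 0)) (nhds (∫ y, Phi s (x - y) * deriv u y)) := by
  have hI2 := u_exists s hs (deriv u) (hu.continuous_deriv le_rfl) hc.deriv x
  have t1 : Tendsto (fun e => ∫ y in (Ioo (x - e) (x + e))ᶜ, Phi s (x - y) * deriv u y)
      (nhdsWithin 0 (Ioi 0)) (nhds (∫ y, Phi s (x - y) * deriv u y)) := by
    simp_rw [← integral_indicator (measurableSet_Ioo.compl)]
    refine tendsto_integral_filter_of_dominated_convergence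
      (fun y => ‖Phi s (x - y) * deriv u y‖) ?_ ?_ hI2.norm ?_
    · exact Eventually.of_forall fun e =>
        hI2.aestronglyMeasurable.indicator measurableSet_Ioo.compl
    · exact Eventually.of_forall fun e => ae_of_all _ fun y => norm_indicator_le_norm_self _ _
    · have : ∀ᵐ y : ℝ, y ≠ x := by simp [ae_iff]
      filter_upwards [this] with y hy
      refine tendsto_const_nhds.congr' ?_
      have hpos : 0 < |y - x| := abs_pos.2 (sub_ne_zero.2 hy)
      filter_upwards [nhdsWithin_le_nhds (Iio_mem_nhds hpos)] with e he
      rw [indicator_of_mem]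
      rintro ⟨h1, h2⟩
      have : |y - x| < e := abs_lt.2 ⟨by linarith, by linarith⟩
      exact absurd this (not_lt.2 (le_of_lt he))
  have t2 : Tendsto (fun e => Phi s e * (u (x + e) - u (x - e))) (nhdsWithin 0 (Ioi 0)) (nhds 0) := by
    have hd : HasDerivAt (fun e => u (x + e) - u (x - e)) (deriv u x + deriv u x) 0 := by
      have hx := (hu.differentiable one_ne_zero x).hasDerivAt
      have a1 : HasDerivAt (fun e => u (x + e)) (deriv u x) 0 := by
        have : HasDerivAt u (deriv u x) (x + 0) := by simpa using hx
        exact this.comp_const_add x 0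
      have a2 : HasDerivAt (fun e => u (x - e)) (-deriv u x) 0 := by
        have : HasDerivAt u (deriv u x) (x - 0) := by simpa using hx
        exact this.comp_const_sub x 0
      exact (a1.sub a2).congr_deriv (by ring)
    have hs1 := (hasDerivAt_iff_tendsto_slope.1 hd).mono_left
      (nhdsWithin_mono 0 (fun y (hy : 0 < y) => hy.ne' : Ioi (0:ℝ) ⊆ {0}ᶜ))
    have := (Phi_mul_tendsto s hs).mul hs1
    rw [zero_mul] at this
    refine this.congr' ?_
    filter_upwards [self_mem_nhdsWithin] with e he
    have he : 0 < e := he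
    simp only [slope_def_field, add_zero, sub_zero, sub_self]
    field_simp
  have t3 := t1.add t2
  rw [add_zero] at t3
  refine t3.congr' ?_
  filter_upwards [self_mem_nhdsWithin] with e he
  exact (u_pv_eq s h0 hs u hu hc x e he).2.symm

lemma w_part (s : ℝ) (h0 : 0 < s) (w : ℝ → ℝ) (hw : Integrable w) (x r R : ℝ)
    (hr : 0 < r) (hw0 : ∀ y, w y ≠ 0 → r ≤ |x - y| ∧ |x - y| ≤ R) :
    (∀ᶠ t in nhds x, Integrable (fun y => Phi s (t - y) * w y)) ∧
    Integrable (fun y => Ker_s1 s (x - y) * w y) ∧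
    HasDerivAt (fun t => ∫ y, Phi s (t - y) * w y) (∫ y, Ker_s1 s (x - y) * w y) x := by
  have hb : ∀ t ∈ Metric.ball x (r / 2), ∀ y, w y ≠ 0 → r / 2 ≤ |t - y| ∧ |t - y| ≤ R + r := by
    intro t ht y hy
    have ⟨h1, h2⟩ := hw0 y hy
    rw [Metric.mem_ball, Real.dist_eq] at ht
    have h3 := abs_sub_le x t y
    have h4 := abs_sub_le t x y
    rw [abs_sub_comm x t] at h3
    constructor <;> linarith
  have hint : ∀ t ∈ Metric.ball x (r / 2), Integrable (fun y => Phi s (t - y) * w y) :=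
    fun t ht => Phi_mul_integrable s t (r / 2) (R + r) (half_pos hr) w hw (hb t ht)
  have hnh : Metric.ball x (r / 2) ∈ nhds x := Metric.ball_mem_nhds x (half_pos hr)
  refine ⟨by filter_upwards [hnh] using hint, ?_⟩
  refine hasDerivAt_integral_of_dominated_loc_of_deriv_le (s := Metric.ball x (r / 2))
    (F := fun t y => Phi s (t - y) * w y) (F' := fun t y => Ker_s1 s (t - y) * w y)
    (bound := fun y => (r / 2) ^ (-(2 * s)) * ‖w y‖) hnh ?_ (hint x (mem_of_mem_nhds hnh)) ?_ ?_ ?_ ?_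
  · filter_upwards [hnh] with t ht using (hint t ht).aestronglyMeasurable
  · exact ((Ker_measurable s).comp
      (measurable_const.sub measurable_id)).aestronglyMeasurable.mul hw.aestronglyMeasurable
  · refine ae_of_all _ fun y t ht => ?_
    by_cases hy : w y = 0
    · simp [hy]
    · rw [norm_mul]
      exact mul_le_mul_of_nonneg_right
        (Ker_bound s h0 (r / 2) _ (half_pos hr) (hb t ht y hy).1) (norm_nonneg _)
  · exact hw.norm.const_mul _
  · refine ae_of_all _ fun y t ht => ?_
    by_cases hy : w y = 0
    · simp only [hy, mul_zero]; exact hasDerivAt_const _ _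
    · have hne : t - y ≠ 0 := abs_pos.1 ((half_pos hr).trans_le (hb t ht y hy).1)
      have := (Phi_hasDerivAt s (t - y) hne).comp_sub_const t y
      exact this.mul_const _

theorem stmt1 (s : ℝ) (hs : s ∈ Set.Ioo (0 : ℝ) 1)
    (M : ℕ) (hM : 1 ≤ M) (a b : Fin M → ℝ) (hab : ∀ i, a i < b i)
    (hdisj : ∀ i j, i ≠ j → Disjoint (Set.Icc (a i) (b i)) (Set.Icc (a j) (b j)))
    (v : ℝ → ℝ)
    (hv : ContDiffOn ℝ 1 v (⋃ i, Set.Ioo (a i) (b i)))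
    (hint : MeasureTheory.IntegrableOn v (⋃ i, Set.Ioo (a i) (b i)))
    (x : ℝ) (hx : x ∈ ⋃ i, Set.Ioo (a i) (b i)) :
    ∃ L : ℝ,
      Filter.Tendsto
        (fun ε : ℝ => ∫ y in (⋃ i, Set.Ioo (a i) (b i)) \ Set.Ioo (x - ε) (x + ε),
          Real.sign (x - y) * |x - y| ^ (-(2 * s)) * v y)
        (nhdsWithin 0 (Set.Ioi 0)) (nhds L) ∧
      HasDerivAt (fun t : ℝ => ∫ y in (⋃ i, Set.Ioo (a i) (b i)), Phi s (t - y) * v y) L x := by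
  obtain ⟨h0, h1⟩ := hs
  have hbd : Bornology.IsBounded (⋃ i, Set.Ioo (a i) (b i)) :=
    Bornology.isBounded_iUnion.2 fun i => Metric.isBounded_Ioo _ _
  have hopen : IsOpen (⋃ i, Set.Ioo (a i) (b i)) := isOpen_iUnion fun i => isOpen_Ioo
  generalize (⋃ i, Set.Ioo (a i) (b i)) = Ω at *
  obtain ⟨d, hd, hdΩ⟩ := Metric.isOpen_iff.1 hopen x hx
  let χ : ContDiffBump x := ⟨d / 4, d / 2, by linarith, by linarith⟩
  have hts : tsupport χ ⊆ Ω := by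
    rw [χ.tsupport_eq]
    exact (Metric.closedBall_subset_ball (by change d / 2 < d; linarith)).trans hdΩ
  set u : ℝ → ℝ := fun y => χ y * v y with hu
  have hcs : HasCompactSupport u := χ.hasCompactSupport.mul_right
  have huts : tsupport u ⊆ tsupport χ := tsupport_mul_subset_left
  have huC : ContDiff ℝ 1 u := by
    rw [contDiff_iff_contDiffAt]
    intro y
    by_cases hy : y ∈ tsupport u
    swap
    · exact contDiffAt_const.congr_of_eventuallyEq (notMem_tsupport_iff_eventuallyEq.1 hy)
    exact χ.contDiff.contDiffAt.mul (hv.contDiffAt (hopen.mem_nhds (hts (huts hy))))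
  have hui : Integrable u := huC.continuous.integrable_of_hasCompactSupport hcs
  have hu0 : ∀ y, y ∉ Ω → u y = 0 := fun y hy =>
    image_eq_zero_of_notMem_tsupport fun h => hy (hts (huts h))
  set w : ℝ → ℝ := fun y => Ω.indicator v y - u y with hwdef
  have hw : Integrable w := (hint.integrable_indicator hopen.measurableSet).sub hui
  obtain ⟨R, hR⟩ := hbd.subset_closedBall x
  have hw0 : ∀ y, w y ≠ 0 → d / 4 ≤ |x - y| ∧ |x - y| ≤ R := by
    intro y hy
    by_cases hyΩ : y ∈ Ω
    · have hyR := hR hyΩ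
      rw [Metric.mem_closedBall, Real.dist_eq, abs_sub_comm] at hyR
      refine ⟨?_, hyR⟩
      by_contra! hlt
      apply hy
      have : χ y = 1 := χ.one_of_mem_closedBall (by
        rw [Metric.mem_closedBall, Real.dist_eq, abs_sub_comm]; exact hlt.le)
      simp [hwdef, hu, this, hyΩ]
    · exact absurd (by simp [hwdef, hyΩ, hu0 y hyΩ]) hy
  obtain ⟨q1, q2, q3⟩ := w_part s h0 w hw x (d / 4) R (by linarith) hw0
  have hsum : ∀ (F : ℝ → ℝ) (y : ℝ), Ω.indicator (fun y => F y * v y) y = F y * u y + F y * w y := by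
    intro F y
    by_cases hy : y ∈ Ω
    · simp [hwdef, hy]; ring
    · simp [hwdef, hy]
  refine ⟨(∫ y, Phi s (x - y) * deriv u y) + ∫ y, Ker_s1 s (x - y) * w y, ?_, ?_⟩
  · refine ((u_pv s h0 h1 u huC hcs x).add_const _).congr' ?_
    filter_upwards [self_mem_nhdsWithin,
      nhdsWithin_le_nhds (Iio_mem_nhds (show (0:ℝ) < d / 4 by linarith))] with e he hed
    have he : 0 < e := he
    have hed : e < d / 4 := hed
    have m : MeasurableSet (Ioo (x - e) (x + e))ᶜ := measurableSet_Ioo.compl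
    have s1 : ∫ y in (Ioo (x - e) (x + e))ᶜ, Ker_s1 s (x - y) * w y = ∫ y, Ker_s1 s (x - y) * w y := by
      apply setIntegral_eq_integral_of_forall_compl_eq_zero
      intro y hy
      rw [notMem_compl_iff] at hy
      have : w y = 0 := by
        by_contra hne
        have := (hw0 y hne).1
        have h2 : |x - y| < e := abs_lt.2 ⟨by linarith [hy.2], by linarith [hy.1]⟩
        linarith
      rw [this, mul_zero]
    rw [← s1, ← integral_add (u_pv_eq s h0 h1 u huC hcs x e he).1 q2.integrableOn,
      sdiff_eq, inter_comm, ← setIntegral_indicator hopen.measurableSet]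
    exact integral_congr_ae (ae_of_all _ fun y => (hsum (fun y => Ker_s1 s (x - y)) y).symm)
  · refine ((u_deriv s h1 u huC hcs x).add q3).congr_of_eventuallyEq ?_
    filter_upwards [q1] with t ht
    rw [Pi.add_apply, ← integral_add (u_exists s h1 u huC.continuous hcs t) ht,
      ← integral_indicator hopen.measurableSet]
    exact integral_congr_ae (ae_of_all _ fun y => hsum (fun y => Phi s (t - y)) y)
end

section
/- Let E = (a,b) ⊂ ℝ be a bounded open interval and let C ⊆ ℂ be open. Let f : E × C → ℂ satisfy: (1) f is continuous on E × C; (2) for each fixed t ∈ E, c ↦ f(t,c) is analytic on C; (3) for each c ∈ C, t ↦ f(t,c) is Lebesgue-integrable on E; and (4) for every compact K ⊂ C, the quantities h_a(η,c) = |∫_a^{a+η} f(t,c) dt| and h_b(η,c) = |∫_{b−η}^b f(t,c) dt| tend to 0 as η → 0⁺, uniformly for c ∈ K. Then the function F(c) = ∫_E f(t,c) dt is analytic on C. -/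
open MeasureTheory Filter Set

lemma aux_compact (a b p q : ℝ) (hp : a < p) (hq : q < b) (C : Set ℂ) (hC : IsOpen C)
    (f : ℝ → ℂ → ℂ)
    (hcont : ContinuousOn (fun p : ℝ × ℂ => f p.1 p.2) (Set.Ioo a b ×ˢ C))
    (hanal : ∀ t ∈ Set.Ioo a b, DifferentiableOn ℂ (f t) C) :
    DifferentiableOn ℂ (fun c => ∫ t in Set.Icc p q, f t c) C := by
  intro c0 hc0
  have hsub : Icc p q ⊆ Ioo a b := fun t ht => ⟨hp.trans_le ht.1, ht.2.trans_lt hq⟩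
  obtain ⟨R, hR, hball⟩ := Metric.nhds_basis_closedBall.mem_iff.1 (hC.mem_nhds hc0)
  set r := R / 2 with hr
  have hr0 : 0 < r := by positivity
  have hKc : IsCompact (Icc p q ×ˢ Metric.closedBall c0 R) :=
    isCompact_Icc.prod (isCompact_closedBall _ _)
  obtain ⟨M, hM⟩ := hKc.exists_bound_of_continuousOn (hcont.mono (prod_mono hsub hball))
  have hct : ∀ c ∈ C, ContinuousOn (fun t => f t c) (Icc p q) := fun c hc =>
    hcont.comp (f := fun t : ℝ => (t, c)) (by fun_prop) (fun t ht => ⟨hsub ht, hc⟩)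
  have hmeas : ∀ c ∈ C, AEStronglyMeasurable (fun t => f t c) (volume.restrict (Icc p q)) :=
    fun c hc => (hct c hc).aestronglyMeasurable measurableSet_Icc
  have hCn : C ∈ nhds c0 := hC.mem_nhds hc0
  have hd : ∀ t ∈ Icc p q, ∀ c ∈ C, HasDerivAt (f t) (deriv (f t) c) c := fun t ht c hc =>
    ((hanal t (hsub ht)).differentiableAt (hC.mem_nhds hc)).hasDerivAt
  have hdm : AEStronglyMeasurable (fun t => deriv (f t) c0) (volume.restrict (Icc p q)) := by
    classical
    refine aestronglyMeasurable_of_tendsto_ae (nhdsWithin c0 {c0}ᶜ)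
      (f := fun y t => if y ∈ C then slope (f t) c0 y else 0) ?_ ?_
    · intro y
      by_cases hy : y ∈ C
      · simp only [hy, if_true, slope_def_field]
        simp only [div_eq_mul_inv]
        exact ((hmeas y hy).sub (hmeas c0 hc0)).mul_const _
      · simp only [hy, if_false]
        exact aestronglyMeasurable_const
    · filter_upwards [ae_restrict_mem measurableSet_Icc] with t ht
      refine (hasDerivAt_iff_tendsto_slope.1 (hd t ht c0 hc0)).congr' ?_
      filter_upwards [mem_nhdsWithin_of_mem_nhds hCn] with y hy
      simp [hy]
  have key := hasDerivAt_integral_of_dominated_loc_of_deriv_le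
    (μ := volume.restrict (Icc p q)) (F := fun c t => f t c) (x₀ := c0)
    (F' := fun c t => deriv (f t) c) (bound := fun _ => M / r)
    (s := Metric.ball c0 r) (Metric.ball_mem_nhds c0 hr0) ?_ ?_ hdm ?_ ?_ ?_
  · exact key.2.differentiableAt.differentiableWithinAt
  · filter_upwards [hCn] with c hc using hmeas c hc
  · exact (hct c0 hc0).integrableOn_Icc
  · filter_upwards [ae_restrict_mem measurableSet_Icc] with t ht c hc
    have hcb : Metric.closedBall c r ⊆ Metric.closedBall c0 R := by
      apply Metric.closedBall_subset_closedBall'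
      have := Metric.mem_ball.1 hc
      linarith
    refine Complex.norm_deriv_le_of_forall_mem_sphere_norm_le hr0 ?_ ?_
    · apply DifferentiableOn.diffContOnCl_ball (U := C) (hanal t (hsub ht)) (hcb.trans hball)
    · intro z hz
      exact hM (t, z) ⟨ht, hcb (Metric.sphere_subset_closedBall hz)⟩
  · exact integrable_const _
  · filter_upwards [ae_restrict_mem measurableSet_Icc] with t ht c hc
    exact hd t ht c (hball (Metric.ball_subset_closedBall
      (Metric.ball_subset_ball (by linarith) hc)))

theorem stmt3 (a b : ℝ) (hab : a < b) (C : Set ℂ) (hC : IsOpen C)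
    (f : ℝ → ℂ → ℂ)
    (hcont : ContinuousOn (fun p : ℝ × ℂ => f p.1 p.2) (Set.Ioo a b ×ˢ C))
    (hanal : ∀ t ∈ Set.Ioo a b, DifferentiableOn ℂ (f t) C)
    (hint : ∀ c ∈ C, MeasureTheory.IntegrableOn (fun t => f t c) (Set.Ioo a b))
    (hunif_a : ∀ K ⊆ C, IsCompact K → ∀ δ > (0 : ℝ), ∃ η₀ > (0 : ℝ),
      ∀ η : ℝ, 0 < η → η < η₀ → ∀ c ∈ K, ‖∫ t in Set.Ioo a (a + η), f t c‖ < δ)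
    (hunif_b : ∀ K ⊆ C, IsCompact K → ∀ δ > (0 : ℝ), ∃ η₀ > (0 : ℝ),
      ∀ η : ℝ, 0 < η → η < η₀ → ∀ c ∈ K, ‖∫ t in Set.Ioo (b - η) b, f t c‖ < δ) :
    DifferentiableOn ℂ (fun c => ∫ t in Set.Ioo a b, f t c) C := by
  have hlim : TendstoLocallyUniformlyOn
      (fun (η : ℝ) c => ∫ t in Set.Icc (a + η) (b - η), f t c)
      (fun c => ∫ t in Set.Ioo a b, f t c) (nhdsWithin 0 (Ioi 0)) C := by
    rw [tendstoLocallyUniformlyOn_iff_forall_isCompact hC]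
    intro K hKC hK
    rw [Metric.tendstoUniformlyOn_iff]
    intro ε hε
    obtain ⟨η₁, h1, H1⟩ := hunif_a K hKC hK (ε / 2) (by positivity)
    obtain ⟨η₂, h2, H2⟩ := hunif_b K hKC hK (ε / 2) (by positivity)
    have hm : 0 < min (min η₁ η₂) ((b - a) / 2) :=
      lt_min (lt_min h1 h2) (by linarith)
    filter_upwards [Ioo_mem_nhdsGT hm] with η hη c hc
    have e0 := hη.1
    have e3 : η < (b - a) / 2 := hη.2.trans_le (min_le_right _ _)
    have e12 : η < min η₁ η₂ := hη.2.trans_le (min_le_left _ _)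
    have A := H1 η e0 (e12.trans_le (min_le_left _ _)) c hc
    have B := H2 η e0 (e12.trans_le (min_le_right _ _)) c hc
    have hi := hint c (hKC hc)
    have u1 : Ioo a b = Ioo a (a + η) ∪ (Icc (a + η) (b - η) ∪ Ioo (b - η) b) := by
      ext t
      simp only [mem_union, mem_Ioo, mem_Icc]
      grind
    have d1 : Disjoint (Ioo a (a + η)) (Icc (a + η) (b - η) ∪ Ioo (b - η) b) := by
      rw [Set.disjoint_left]
      simp only [mem_union, mem_Ioo, mem_Icc]
      grind
    have d2 : Disjoint (Icc (a + η) (b - η)) (Ioo (b - η) b) := by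
      rw [Set.disjoint_left]
      simp only [mem_Ioo, mem_Icc]
      grind
    rw [u1, integrableOn_union, integrableOn_union] at hi
    have E : ∫ t in Ioo a b, f t c = (∫ t in Ioo a (a + η), f t c) +
        ((∫ t in Icc (a + η) (b - η), f t c) + ∫ t in Ioo (b - η) b, f t c) := by
      rw [u1, setIntegral_union d1 (measurableSet_Icc.union measurableSet_Ioo) hi.1
        (hi.2.1.union hi.2.2), setIntegral_union d2 measurableSet_Ioo hi.2.1 hi.2.2]
    rw [dist_eq_norm, E]
    calc _ = ‖(∫ t in Ioo a (a + η), f t c) + ∫ t in Ioo (b - η) b, f t c‖ := by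
          congr 1; ring
      _ ≤ _ := norm_add_le _ _
      _ < ε := by linarith
  refine hlim.differentiableOn ?_ hC
  filter_upwards [self_mem_nhdsWithin] with η hη
  have : 0 < η := hη
  exact aux_compact a b _ _ (by linarith) (by linarith) C hC f hcont hanal
end

section
/- Let 0 < s < 1/2, 0 < α < 2s, and x ∈ (0,1). Then N_α^s(x) = x^{α−2s} [ Γ(α)Γ(1−2s)/Γ(1+α−2s) − Γ(1−2s)Γ(2s−α)/Γ(1−α) ] + Σ_{k=0}^∞ ((2s)_k / (2s−α+k)) x^k / k!, where the series on the right converges. -/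
open MeasureTheory Filter Set

/-- `Npv s α x L` means the principal value
`P.V. ∫_0^1 sgn(x−y)|x−y|^{−2s} y^{α−1} dy` exists and equals `L`. -/
def Npv (s α x L : ℝ) : Prop :=
  Filter.Tendsto
    (fun ε : ℝ => ∫ y in Set.Ioo (0 : ℝ) 1 \ Set.Ioo (x - ε) (x + ε),
      Real.sign (x - y) * |x - y| ^ (-(2 * s)) * y ^ (α - 1))
    (nhdsWithin 0 (Set.Ioi 0)) (nhds L)


lemma aux_choose (c : ℝ) (hc : 0 < c) (k : ℕ) :
    Ring.choose (c + k - 1) k = Real.Gamma (c + k) / Real.Gamma c / (k.factorial : ℝ) := by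
  have h : Real.Gamma (c + k) / Real.Gamma c = (ascPochhammer ℝ k).eval c := by
    induction k with
    | zero => simp [(Real.Gamma_pos_of_pos hc).ne']
    | succ n ih =>
      have h1 : c + (n : ℝ) ≠ 0 := by positivity
      rw [ascPochhammer_succ_eval, ← ih, Nat.cast_succ, ← add_assoc, Real.Gamma_add_one h1]
      ring
  have h2 := Ring.factorial_nsmul_multichoose_eq_ascPochhammer c k
  rw [Ring.multichoose_eq, Polynomial.ascPochhammer_smeval_eq_eval, nsmul_eq_mul] at h2
  rw [h, ← h2]
  field_simp

lemma aux_binom (c : ℝ) (hc : 0 < c) (t : ℝ) (ht : 0 ≤ t) (ht' : t < 1) :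
    HasSum (fun k : ℕ => Real.Gamma (c + k) / Real.Gamma c / (k.factorial : ℝ) * t ^ k)
      ((1 - t) ^ (-c)) := by
  have h := (Real.one_div_one_sub_rpow_hasFPowerSeriesOnBall_zero c).hasSum (y := t)
    (by
      rw [Metric.mem_eball, edist_zero_right, Real.enorm_of_nonneg ht]
      simpa using ht')
  simp only [zero_add, FormalMultilinearSeries.ofScalars_apply_eq, smul_eq_mul, one_div,
    aux_choose c hc] at h
  rwa [← Real.rpow_neg (by linarith)] at h

lemma aux_beta (a b : ℝ) (ha : 0 < a) (hb : 0 < b) :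
    IntegrableOn (fun t : ℝ => t ^ (a - 1) * (1 - t) ^ (b - 1)) (Ioo 0 1) ∧
    ∫ t in Ioo (0 : ℝ) 1, t ^ (a - 1) * (1 - t) ^ (b - 1)
      = Real.Gamma a * Real.Gamma b / Real.Gamma (a + b) := by
  have h := Complex.betaIntegral_convergent (u := a) (v := b) (by simpa) (by simpa)
  rw [intervalIntegrable_iff_integrableOn_Ioo_of_le zero_le_one] at h
  have e : ∀ t ∈ Ioo (0 : ℝ) 1, (t : ℂ) ^ ((a : ℂ) - 1) * (1 - (t : ℂ)) ^ ((b : ℂ) - 1)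
      = ((t ^ (a - 1) * (1 - t) ^ (b - 1) : ℝ) : ℂ) := by
    intro t ht
    rw [Complex.ofReal_mul, Complex.ofReal_cpow ht.1.le, Complex.ofReal_cpow (by linarith [ht.2])]
    push_cast; rfl
  have h' : IntegrableOn (fun t : ℝ => ((t ^ (a - 1) * (1 - t) ^ (b - 1) : ℝ) : ℂ)) (Ioo 0 1) :=
    h.congr_fun e measurableSet_Ioo
  refine ⟨?_, ?_⟩
  · have h2 := Integrable.re h'
    simp only [RCLike.re_to_complex, Complex.ofReal_re] at h2
    exact h2
  have hB := ProbabilityTheory.beta_eq_betaIntegralReal a b ha hb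
  rw [ProbabilityTheory.beta] at hB
  rw [hB, Complex.betaIntegral, intervalIntegral.integral_of_le zero_le_one,
    integral_Ioc_eq_integral_Ioo, setIntegral_congr_fun measurableSet_Ioo e, integral_complex_ofReal, Complex.ofReal_re]

lemma aux_mono (p x : ℝ) (hp : 0 < p) (hx : 0 < x) (k : ℕ) :
    IntegrableOn (fun t : ℝ => t ^ k * t ^ (p - 1)) (Ioo 0 x) ∧
    ∫ t in Ioo (0 : ℝ) x, t ^ k * t ^ (p - 1) = x ^ p * x ^ k / (p + k) := by
  have e : ∀ t ∈ Ioo (0 : ℝ) x, t ^ (k + (p - 1)) = t ^ k * t ^ (p - 1) := by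
    intro t ht
    rw [Real.rpow_add ht.1, Real.rpow_natCast]
  have hk : -1 < (k : ℝ) + (p - 1) := by
    have : (0:ℝ) ≤ k := k.cast_nonneg
    linarith
  constructor
  · refine IntegrableOn.congr_fun ?_ e measurableSet_Ioo
    rw [← intervalIntegrable_iff_integrableOn_Ioo_of_le hx.le]
    exact intervalIntegral.intervalIntegrable_rpow' hk
  · rw [← setIntegral_congr_fun measurableSet_Ioo e, ← integral_Ioc_eq_integral_Ioo,
      ← intervalIntegral.integral_of_le hx.le, integral_rpow (Or.inl hk)]
    rw [Real.zero_rpow (by linarith), ← Real.rpow_natCast, ← Real.rpow_add hx, sub_zero]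
    ring_nf

lemma aux_series (c p x : ℝ) (hc : 0 < c) (hp : 0 < p) (hx : 0 < x) (hx' : x < 1) :
    HasSum (fun k : ℕ => Real.Gamma (c + k) / Real.Gamma c / (p + k) * x ^ k
            / (k.factorial : ℝ))
      (x ^ (-p) * ∫ t in Ioo (0 : ℝ) x, t ^ (p - 1) * (1 - t) ^ (-c)) := by
  set w : ℕ → ℝ := fun k => Real.Gamma (c + k) / Real.Gamma c / (k.factorial : ℝ) with hw
  have hw0 : ∀ k, 0 ≤ w k := by
    intro k
    have := Real.Gamma_pos_of_pos hc
    have := Real.Gamma_pos_of_pos (show 0 < c + k by positivity)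
    positivity
  have hI : ∀ k : ℕ, ∫ t in Ioo (0 : ℝ) x, w k * (t ^ k * t ^ (p - 1))
      = w k * (x ^ p * x ^ k / (p + k)) := by
    intro k; rw [integral_const_mul, (aux_mono p x hp hx k).2]
  have key := hasSum_integral_of_summable_integral_norm (μ := volume.restrict (Ioo 0 x))
    (F := fun (k : ℕ) (t : ℝ) => w k * (t ^ k * t ^ (p - 1)))
    (fun k => (aux_mono p x hp hx k).1.const_mul _) ?_
  · have e : ∫ t in Ioo (0 : ℝ) x, ∑' k, w k * (t ^ k * t ^ (p - 1))
        = ∫ t in Ioo (0 : ℝ) x, t ^ (p - 1) * (1 - t) ^ (-c) := by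
      refine setIntegral_congr_fun measurableSet_Ioo fun t ht => ?_
      have := (aux_binom c hc t ht.1.le (by linarith [ht.2])).mul_right (t ^ (p - 1))
      simp only [mul_assoc] at this
      rw [mul_comm (t ^ (p - 1))]
      exact this.tsum_eq
    rw [e] at key
    simp only [hI] at key
    refine Eq.subst (motive := fun f => HasSum f _) (funext fun k => ?_) (key.mul_left (x ^ (-p)))
    symm
    have : x ^ (-p) * x ^ p = 1 := by rw [← Real.rpow_add hx]; simp
    rw [show x ^ (-p) * (w k * (x ^ p * x ^ k / (p + k))) =
      (x ^ (-p) * x ^ p) * (w k * (x ^ k / (p + k))) by ring, this]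
    simp only [hw]; ring
  · have e : ∀ k : ℕ, ∫ t in Ioo (0 : ℝ) x, ‖w k * (t ^ k * t ^ (p - 1))‖
        = w k * (x ^ p * x ^ k / (p + k)) := by
      intro k
      rw [← hI]
      refine setIntegral_congr_fun measurableSet_Ioo fun t ht => ?_
      have := ht.1
      have := hw0 k
      exact Real.norm_of_nonneg (by positivity)
    simp only [e]
    refine Summable.of_nonneg_of_le (fun k => ?_) (fun k => ?_)
      ((aux_binom c hc x hx.le hx').summable.mul_left (x ^ p / p))
    · have := hw0 k
      positivity
    · have := hw0 k
      have : x ^ p * x ^ k / (p + k) ≤ x ^ p * x ^ k / p := by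
        gcongr; simp
      calc w k * (x ^ p * x ^ k / (p + k)) ≤ w k * (x ^ p * x ^ k / p) := by gcongr
        _ = _ := by simp only [hw]; ring

/-- left part -/
lemma aux_left (c α x : ℝ) (hc : c < 1) (hα : 0 < α) (hx : 0 < x) :
    IntegrableOn (fun y : ℝ => (x - y) ^ (-c) * y ^ (α - 1)) (Ioo 0 x) ∧
    ∫ y in Ioo (0 : ℝ) x, (x - y) ^ (-c) * y ^ (α - 1)
      = x ^ (α - c) * (Real.Gamma α * Real.Gamma (1 - c) / Real.Gamma (1 + α - c)) := by
  have him : (fun t : ℝ => x * t) '' Ioo 0 1 = Ioo 0 x := by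
    rw [image_mul_left_Ioo hx]; simp
  have hd : ∀ t ∈ Ioo (0 : ℝ) 1, HasDerivWithinAt (fun t : ℝ => x * t) x (Ioo 0 1) t := by
    intro t _
    simpa using ((hasDerivAt_id t).const_mul x).hasDerivWithinAt
  have hinj : InjOn (fun t : ℝ => x * t) (Ioo 0 1) := fun a _ b _ h =>
    mul_left_cancel₀ hx.ne' h
  have e : ∀ t ∈ Ioo (0 : ℝ) 1, x ^ (α - c) * (t ^ (α - 1) * (1 - t) ^ ((1 - c) - 1))
     = |x| • ((x - x * t) ^ (-c) * (x * t) ^ (α - 1)) := by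
    intro t ht
    have h1 : 0 < 1 - t := by linarith [ht.2]
    rw [show x - x * t = x * (1 - t) by ring, Real.mul_rpow hx.le h1.le,
      Real.mul_rpow hx.le ht.1.le, abs_of_pos hx, smul_eq_mul,
      show α - c = 1 + -c + (α - 1) by ring, Real.rpow_add hx, Real.rpow_add hx, Real.rpow_one,
      show 1 - c - 1 = -c by ring]
    ring
  obtain ⟨b1, b2⟩ := aux_beta α (1 - c) hα (by linarith)
  constructor
  · rw [← him, integrableOn_image_iff_integrableOn_abs_deriv_smul measurableSet_Ioo hd hinj]
    exact IntegrableOn.congr_fun (b1.const_mul (x ^ (α - c))) e measurableSet_Ioo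
  · rw [← him, integral_image_eq_integral_abs_deriv_smul measurableSet_Ioo hd hinj,
      ← setIntegral_congr_fun measurableSet_Ioo e, integral_const_mul, b2,
      show α + (1 - c) = 1 + α - c by ring]

/-- right part -/
lemma aux_right (c α x : ℝ) (hc : c < 1) (hα : α < c) (hx : 0 < x) (hx' : x < 1) :
    IntegrableOn (fun y : ℝ => (y - x) ^ (-c) * y ^ (α - 1)) (Ioo x 1) ∧
    ∫ y in Ioo x 1, (y - x) ^ (-c) * y ^ (α - 1)
      = x ^ (α - c) * (Real.Gamma (1 - c) * Real.Gamma (c - α) / Real.Gamma (1 - α)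
        - ∫ t in Ioo (0 : ℝ) x, t ^ (c - α - 1) * (1 - t) ^ (-c)) := by
  have him : (fun t : ℝ => x / t) '' Ioo x 1 = Ioo x 1 := by
    ext y
    simp only [mem_image, mem_Ioo]
    constructor
    · rintro ⟨t, ⟨h1, h2⟩, rfl⟩
      have ht : 0 < t := by linarith
      exact ⟨by rw [lt_div_iff₀ ht]; nlinarith, by rw [div_lt_one ht]; exact h1⟩
    · rintro ⟨h1, h2⟩
      have ht : 0 < y := by linarith
      exact ⟨x / y, ⟨by rw [lt_div_iff₀ ht]; nlinarith, by rw [div_lt_one ht]; exact h1⟩,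
        by field_simp⟩
  have hd : ∀ t ∈ Ioo x 1, HasDerivWithinAt (fun t : ℝ => x / t) (-x / t ^ 2) (Ioo x 1) t := by
    intro t ht
    have ht0 : t ≠ 0 := by linarith [ht.1]
    have := ((hasDerivAt_inv ht0).const_mul x).hasDerivWithinAt (s := Ioo x 1)
    convert! this using 1
    field_simp
  have hinj : InjOn (fun t : ℝ => x / t) (Ioo x 1) := by
    intro a ha b hb h
    have ha0 : a ≠ 0 := by linarith [ha.1]
    have hb0 : b ≠ 0 := by linarith [hb.1]
    simp only at h
    field_simp at h
    exact h.symm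
  have e : ∀ t ∈ Ioo x 1, x ^ (α - c) * (t ^ (c - α - 1) * (1 - t) ^ ((1 - c) - 1))
     = |-x / t ^ 2| • ((x / t - x) ^ (-c) * (x / t) ^ (α - 1)) := by
    intro t ht
    have h1 : 0 < 1 - t := by linarith [ht.2]
    have ht0 : 0 < t := by linarith [ht.1]
    have ti : 0 < t⁻¹ := inv_pos.2 ht0
    rw [show x / t - x = x * (t⁻¹ * (1 - t)) by field_simp, Real.mul_rpow hx.le (by positivity),
      Real.mul_rpow ti.le h1.le, div_eq_mul_inv x t,
      Real.mul_rpow hx.le ti.le, abs_div, abs_neg, abs_of_pos hx, abs_of_pos (by positivity),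
      smul_eq_mul,
      show α - c = 1 + -c + (α - 1) by ring, Real.rpow_add hx, Real.rpow_add hx, Real.rpow_one,
      show 1 - c - 1 = -c by ring, Real.inv_rpow ht0.le, Real.inv_rpow ht0.le,
      ← Real.rpow_neg ht0.le, ← Real.rpow_neg ht0.le, div_eq_mul_inv x, ← Real.rpow_natCast t 2,
      ← Real.rpow_neg ht0.le]
    rw [show c - α - 1 = -((2 : ℕ) : ℝ) + - -c + -(α - 1) by push_cast; ring,
      Real.rpow_add ht0, Real.rpow_add ht0]
    ring
  obtain ⟨b1, b2⟩ := aux_beta (c - α) (1 - c) (by linarith) (by linarith)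
  have b1l := b1.mono_set (Ioo_subset_Ioo_right hx'.le)
  have b1r := b1.mono_set (Ioo_subset_Ioo_left hx.le)
  constructor
  · rw [← him, integrableOn_image_iff_integrableOn_abs_deriv_smul measurableSet_Ioo hd hinj]
    exact IntegrableOn.congr_fun (b1r.const_mul (x ^ (α - c))) e measurableSet_Ioo
  · have hsplit : (∫ t in Ioo (0 : ℝ) 1, t ^ (c - α - 1) * (1 - t) ^ ((1 - c) - 1))
        = (∫ t in Ioo (0 : ℝ) x, t ^ (c - α - 1) * (1 - t) ^ ((1 - c) - 1))
          + ∫ t in Ioo x 1, t ^ (c - α - 1) * (1 - t) ^ ((1 - c) - 1) := by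
      rw [← integral_Ioc_eq_integral_Ioo (x := (0:ℝ)) (y := x),
        ← setIntegral_union _ measurableSet_Ioo, Ioc_union_Ioo_eq_Ioo hx.le hx']
      · rwa [integrableOn_Ioc_iff_integrableOn_Ioo]
      · exact b1r
      · rw [Set.disjoint_left]; rintro y hy hy'; exact absurd hy.2 (not_le.2 hy'.1)
    conv_lhs => rw [← him]
    rw [integral_image_eq_integral_abs_deriv_smul measurableSet_Ioo hd hinj,
      ← setIntegral_congr_fun measurableSet_Ioo e, integral_const_mul]
    rw [b2, show c - α + (1 - c) = 1 - α by ring, show 1 - c - 1 = -c by ring] at hsplit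
    rw [show 1 - c - 1 = -c by ring, mul_comm (Real.Gamma (1 - c)), hsplit]
    ring

lemma aux_pv (f : ℝ → ℝ) (x : ℝ) (hf : IntegrableOn f (Ioo 0 1)) :
    Tendsto (fun ε : ℝ => ∫ y in Ioo (0 : ℝ) 1 \ Ioo (x - ε) (x + ε), f y)
      (nhdsWithin 0 (Ioi 0)) (nhds (∫ y in Ioo (0 : ℝ) 1, f y)) := by
  have e : ∀ ε : ℝ, ∫ y in Ioo (0 : ℝ) 1 \ Ioo (x - ε) (x + ε), f y
      = ∫ y in Ioo (0 : ℝ) 1, (Ioo (x - ε) (x + ε))ᶜ.indicator f y := by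
    intro ε
    rw [setIntegral_indicator measurableSet_Ioo.compl]; rfl
  simp only [e]
  refine tendsto_integral_filter_of_dominated_convergence (fun y => ‖f y‖) ?_ ?_ hf.norm ?_
  · exact Eventually.of_forall fun ε => hf.1.indicator measurableSet_Ioo.compl
  · exact Eventually.of_forall fun ε => Eventually.of_forall fun y => norm_indicator_le_norm_self _ _
  · have : ∀ᵐ y ∂(volume.restrict (Ioo (0:ℝ) 1)), y ≠ x := Measure.ae_ne _ x
    filter_upwards [this] with y hy
    refine tendsto_const_nhds.congr' ?_
    have h0 : 0 < |y - x| := abs_pos.2 (sub_ne_zero.2 hy)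
    filter_upwards [mem_nhdsWithin_of_mem_nhds (Iio_mem_nhds h0)] with ε hε
    rw [indicator_of_mem]
    rintro ⟨h1, h2⟩
    have : |y - x| < ε := abs_lt.2 ⟨by linarith, by linarith⟩
    exact absurd hε (not_lt.2 this.le)

theorem stmt4 (s α x : ℝ) (hs : 0 < s) (hs' : s < 1 / 2) (hα : 0 < α) (hα' : α < 2 * s)
    (hx : x ∈ Set.Ioo (0 : ℝ) 1) :
    ∃ S : ℝ,
      HasSum
        (fun k : ℕ =>
          (Real.Gamma (2 * s + k) / Real.Gamma (2 * s)) / (2 * s - α + k) * x ^ k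
            / (k.factorial : ℝ)) S ∧
      Npv s α x (x ^ (α - 2 * s) *
        (Real.Gamma α * Real.Gamma (1 - 2 * s) / Real.Gamma (1 + α - 2 * s)
          - Real.Gamma (1 - 2 * s) * Real.Gamma (2 * s - α) / Real.Gamma (1 - α)) + S) := by
  obtain ⟨hx0, hx1⟩ := hx
  refine ⟨_, aux_series (2 * s) (2 * s - α) x (by linarith) (by linarith) hx0 hx1, ?_⟩
  obtain ⟨l1, l2⟩ := aux_left (2 * s) α x (by linarith) hα hx0
  obtain ⟨r1, r2⟩ := aux_right (2 * s) α x (by linarith) hα' hx0 hx1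
  have el : ∀ y ∈ Ioo 0 x, (x - y) ^ (-(2 * s)) * y ^ (α - 1)
      = Real.sign (x - y) * |x - y| ^ (-(2 * s)) * y ^ (α - 1) := by
    intro y hy
    have : 0 < x - y := by linarith [hy.2]
    rw [Real.sign_of_pos this, abs_of_pos this, one_mul]
  have er : ∀ y ∈ Ioo x 1, -((y - x) ^ (-(2 * s)) * y ^ (α - 1))
      = Real.sign (x - y) * |x - y| ^ (-(2 * s)) * y ^ (α - 1) := by
    intro y hy
    have : x - y < 0 := by linarith [hy.1]
    rw [Real.sign_of_neg this, abs_of_neg this, neg_sub]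
    ring
  have l3 := l1.congr_fun el measurableSet_Ioo
  have r3 := r1.neg.congr_fun er measurableSet_Ioo
  rw [setIntegral_congr_fun measurableSet_Ioo el] at l2
  have r4 := setIntegral_congr_fun (μ := volume) measurableSet_Ioo er
  rw [integral_neg, r2] at r4
  have l5 := l3
  rw [← integrableOn_Ioc_iff_integrableOn_Ioo] at l5
  have hdisj : Disjoint (Ioc 0 x) (Ioo x 1) := by
    rw [Set.disjoint_left]; rintro y hy hy'; exact absurd hy.2 (not_le.2 hy'.1)
  have hint := l5.union r3
  have hval := setIntegral_union hdisj measurableSet_Ioo l5 r3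
  rw [Ioc_union_Ioo_eq_Ioo hx0.le hx1] at hint hval
  rw [integral_Ioc_eq_integral_Ioo, l2, ← r4] at hval
  have := aux_pv _ x hint
  rw [hval] at this
  unfold Npv
  convert this using 2
  rw [neg_sub]
  ring
end

section
/- Let s ∈ (0,1) and n ∈ ℕ∪{0}. Then for every x ∈ (0,1), N_{s+n}^s(x) = Σ_{k=0}^∞ ((2s)_k / (s−n+k)) x^k / k!, and the power series on the right-hand side converges for every complex x with |x| < 1; consequently N_{s+n}^s extends analytically to the unit disc {x ∈ ℂ : |x| < 1}. -/
open MeasureTheory Filter Set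

/-- The coefficient `(2s)_k / (s−n+k) / k!` of the series in Theorem 3.3. -/
noncomputable def NsCoeff (s : ℝ) (n k : ℕ) : ℝ :=
  (Real.Gamma (2 * s + k) / Real.Gamma (2 * s)) / (s - n + k) / (k.factorial : ℝ)


noncomputable def cc (a : ℝ) (k : ℕ) : ℝ := (ascPochhammer ℝ k).eval a / (k.factorial : ℝ)

lemma cc_zero (a : ℝ) : cc a 0 = 1 := by simp [cc]

lemma cc_succ (a : ℝ) (k : ℕ) : cc a (k+1) = cc a k * (a + k) / (k + 1) := by
  unfold cc
  rw [ascPochhammer_succ_eval, Nat.factorial_succ]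
  push_cast
  field_simp

lemma cc_pred (a : ℝ) (k : ℕ) : cc (a - 1) (k+1) = cc a k * (a - 1) / (k + 1) := by
  unfold cc
  rw [ascPochhammer_succ_left, Nat.factorial_succ]
  simp [Polynomial.eval_comp]
  field_simp

lemma cc_nonneg {a : ℝ} (ha : 0 < a) (k : ℕ) : 0 ≤ cc a k := by
  unfold cc
  exact div_nonneg (ascPochhammer_pos k a ha).le (by positivity)

lemma cc_choose (a : ℝ) (k : ℕ) : Ring.choose (a + k - 1) k = cc a k := by
  rw [← Ring.multichoose_eq]
  have := Ring.factorial_nsmul_multichoose_eq_ascPochhammer a k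
  rw [Polynomial.ascPochhammer_smeval_cast, Polynomial.ascPochhammer_smeval_eq_eval] at this
  unfold cc
  rw [← this, nsmul_eq_mul]
  field_simp

lemma hasSum_cc (a x : ℝ) (hx : |x| < 1) :
    HasSum (fun k => cc a k * x ^ k) ((1 - x) ^ (-a)) := by
  have h := (Real.one_div_one_sub_rpow_hasFPowerSeriesOnBall_zero a).hasSum (y := x)
    (by simpa [enorm_eq_nnnorm, ← NNReal.coe_lt_coe] using hx)
  simp only [FormalMultilinearSeries.ofScalars_apply_eq, cc_choose, zero_add, smul_eq_mul] at h
  rw [Real.rpow_neg (by linarith [(abs_lt.1 hx).2]), ← one_div]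
  exact h

lemma gamma_poch {a : ℝ} (ha : 0 < a) (k : ℕ) :
    Real.Gamma (a + k) / Real.Gamma a = (ascPochhammer ℝ k).eval a := by
  induction k with
  | zero => simp [(Real.Gamma_pos_of_pos ha).ne']
  | succ k ih =>
    rw [ascPochhammer_succ_eval, ← ih]
    push_cast
    rw [← add_assoc, Real.Gamma_add_one (by positivity)]
    ring

lemma NsCoeff_eq {s : ℝ} (hs : 0 < s) (n k : ℕ) : NsCoeff s n k = cc (2*s) k / (s - n + k) := by
  unfold NsCoeff cc
  rw [gamma_poch (by linarith)]
  ring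

lemma den_bound {s : ℝ} (hs : s ∈ Set.Ioo (0 : ℝ) 1) (n k : ℕ) :
    min s (1 - s) ≤ |s - n + k| := by
  obtain ⟨h0, h1⟩ := hs
  rcases le_or_gt n k with h | h
  · have : (n:ℝ) ≤ k := by exact_mod_cast h
    exact (min_le_left _ _).trans (le_abs.2 (Or.inl (by linarith)))
  · have : (k:ℝ) + 1 ≤ n := by exact_mod_cast h
    exact (min_le_right _ _).trans (le_abs.2 (Or.inr (by linarith)))

lemma den_ne {s : ℝ} (hs : s ∈ Set.Ioo (0 : ℝ) 1) (n k : ℕ) : s - n + k ≠ 0 := by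
  have h1 := den_bound hs n k
  have h2 : 0 < min s (1 - s) := lt_min hs.1 (by linarith [hs.2])
  exact abs_pos.1 (h2.trans_le h1)

lemma summable_abs {s : ℝ} (hs : s ∈ Set.Ioo (0 : ℝ) 1) (n : ℕ) {r : ℝ} (hr : 0 ≤ r)
    (hr1 : r < 1) : Summable (fun k => |NsCoeff s n k| * r ^ k) := by
  have h2 : 0 < min s (1 - s) := lt_min hs.1 (by linarith [hs.2])
  have := (hasSum_cc (2*s) r (by rwa [abs_of_nonneg hr])).summable.mul_left (min s (1-s))⁻¹
  refine Summable.of_nonneg_of_le (fun k => by positivity) (fun k => ?_) this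
  rw [NsCoeff_eq hs.1, abs_div, abs_of_nonneg (cc_nonneg (by linarith [hs.1]) k), ← mul_assoc]
  gcongr
  rw [div_eq_mul_inv, mul_comm]
  have := cc_nonneg (a := 2*s) (by linarith [hs.1]) k
  gcongr
  exact den_bound hs n k

lemma summable_real {s : ℝ} (hs : s ∈ Set.Ioo (0 : ℝ) 1) (n : ℕ) {x : ℝ} (hx : x ∈ Set.Ioo (0:ℝ) 1) :
    Summable (fun k => NsCoeff s n k * x ^ k) := by
  refine Summable.of_norm ?_
  refine (summable_abs hs n hx.1.le hx.2).congr fun k => ?_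
  rw [Real.norm_eq_abs, abs_mul, abs_of_nonneg (pow_nonneg hx.1.le k)]

lemma series_rec {s : ℝ} (hs : s ∈ Set.Ioo (0 : ℝ) 1) (n : ℕ) {x : ℝ} (hx : x ∈ Set.Ioo (0:ℝ) 1) :
    (s + n) * x * (∑' k, NsCoeff s n k * x ^ k) - (n + 1 - s) * ∑' k, NsCoeff s (n+1) k * x ^ k
      = (1 - x) ^ (1 - 2 * s) := by
  have h1 := (summable_real hs n hx).hasSum.mul_left ((s + n) * x)
  have h2 := (summable_real hs (n+1) hx)
  have h3 := ((hasSum_nat_add_iff' 1).2 h2.hasSum).mul_left (n + 1 - s)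
  have h4 := h1.sub h3
  have h5 := hasSum_cc (2*s-1) x (by rw [abs_of_pos hx.1]; exact hx.2)
  have h6 := (hasSum_nat_add_iff' 1).2 h5
  have h7 := h4.unique (h6.congr_fun fun k => ?_)
  · simp only [Finset.range_one, Finset.sum_singleton, pow_zero, mul_one, cc_zero] at h7
    rw [show -(2*s-1) = 1 - 2*s by ring, NsCoeff_eq hs.1, cc_zero] at h7
    have e : (n + 1 - s) * (1 / (s - ((n+1 : ℕ):ℝ) + ((0:ℕ):ℝ))) = -1 := by
      have := den_ne hs (n+1) 0
      push_cast at this ⊢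
      field_simp
      ring
    linear_combination h7 - e
  · rw [NsCoeff_eq hs.1, NsCoeff_eq hs.1, cc_pred, cc_succ]
    have a1 := den_ne hs (n+1) (k+1)
    have a2 := den_ne hs n k
    push_cast at a1 ⊢
    have a3 : s - (n+1) + (k+1) = s - n + k := by ring
    rw [a3]
    field_simp
    ring

lemma part1 {s : ℝ} (hs : s ∈ Set.Ioo (0 : ℝ) 1) (n : ℕ) (z : ℂ) (hz : ‖z‖ < 1) :
    Summable (fun k : ℕ => ((NsCoeff s n k : ℝ) : ℂ) * z ^ k) := by
  refine Summable.of_norm ?_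
  simpa using summable_abs hs n (norm_nonneg z) hz

lemma part2 {s : ℝ} (hs : s ∈ Set.Ioo (0 : ℝ) 1) (n : ℕ) :
    DifferentiableOn ℂ (fun z : ℂ => ∑' k : ℕ, ((NsCoeff s n k : ℝ) : ℂ) * z ^ k)
      (Metric.ball 0 1) := by
  intro z hz
  have hz : ‖z‖ < 1 := by simpa using hz
  obtain ⟨r, hr, hr1⟩ := exists_between hz
  have hr0 : 0 ≤ r := (norm_nonneg z).trans hr.le
  have := Complex.differentiableOn_tsum_of_summable_norm (F := fun k (z:ℂ) => ((NsCoeff s n k : ℝ) : ℂ) * z ^ k)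
    (summable_abs hs n hr0 hr1) (U := Metric.ball 0 r) (fun k => by fun_prop) Metric.isOpen_ball
    (fun k w hw => by
      have hw : ‖w‖ < r := by simpa using hw
      simp only [norm_mul, norm_pow, Complex.norm_real, Real.norm_eq_abs]
      gcongr)
  exact (this.differentiableAt (Metric.isOpen_ball.mem_nhds (by simpa using hr))).differentiableWithinAt


lemma intL {s α x b : ℝ} (hα : 0 < α) (hb : 0 < b) (hbx : b < x) :
    IntervalIntegrable (fun y : ℝ => (x - y) ^ (-(2*s)) * y ^ (α - 1)) volume 0 b := by
  refine (intervalIntegral.intervalIntegrable_rpow' (by linarith)).continuousOn_mul ?_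
  rw [uIcc_of_le hb.le]
  refine ContinuousOn.rpow_const (by fun_prop) fun y hy => Or.inl ?_
  have := hy.2
  linarith

lemma contR {s α x b : ℝ} (hx : 0 < x) (hb : x < b) :
    ContinuousOn (fun y : ℝ => (y - x) ^ (-(2*s)) * y ^ (α - 1)) (Icc b 1) := by
  refine ContinuousOn.mul (ContinuousOn.rpow_const (by fun_prop) fun y hy => Or.inl ?_)
    (ContinuousOn.rpow_const (by fun_prop) fun y hy => Or.inl ?_)
  · have := hy.1
    linarith
  · have := hy.1
    linarith

lemma intR {s α x b : ℝ} (hx : 0 < x) (hb : x < b) (hb1 : b ≤ 1) :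
    IntervalIntegrable (fun y : ℝ => (y - x) ^ (-(2*s)) * y ^ (α - 1)) volume b 1 := by
  apply ContinuousOn.intervalIntegrable
  rw [uIcc_of_le hb1]
  exact contR hx hb

noncomputable def TT (s α x ε : ℝ) : ℝ :=
  (∫ y in (0:ℝ)..(x - ε), (x - y) ^ (-(2*s)) * y ^ (α - 1)) -
    ∫ y in (x + ε)..1, (y - x) ^ (-(2*s)) * y ^ (α - 1)

lemma split_int {s α x ε : ℝ} (hα : 0 < α) (hx : 0 < x) (he : 0 < ε) (hex : ε < x)
    (hex1 : ε < 1 - x) :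
    (∫ y in Set.Ioo (0 : ℝ) 1 \ Set.Ioo (x - ε) (x + ε),
      Real.sign (x - y) * |x - y| ^ (-(2 * s)) * y ^ (α - 1)) = TT s α x ε := by
  have hset : Set.Ioo (0 : ℝ) 1 \ Set.Ioo (x - ε) (x + ε) = Ioc 0 (x - ε) ∪ Ico (x + ε) 1 := by
    ext y
    simp only [Set.mem_sdiff, mem_Ioo, mem_union, mem_Ioc, mem_Ico, not_and, not_lt]
    constructor
    · rintro ⟨⟨h1, h2⟩, h3⟩
      rcases le_or_gt y (x - ε) with h | h
      · exact Or.inl ⟨h1, h⟩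
      · exact Or.inr ⟨h3 h, h2⟩
    · rintro (⟨h1, h2⟩ | ⟨h1, h2⟩)
      · exact ⟨⟨h1, by linarith⟩, fun h => by linarith⟩
      · exact ⟨⟨by linarith, h2⟩, fun h => h1⟩
  have eL : EqOn (fun y : ℝ => (x - y) ^ (-(2*s)) * y ^ (α - 1))
      (fun y => Real.sign (x - y) * |x - y| ^ (-(2 * s)) * y ^ (α - 1)) (Ioc 0 (x - ε)) := by
    intro y hy
    have : 0 < x - y := by linarith [hy.2]
    simp only [Real.sign_of_pos this, abs_of_pos this, one_mul]
  have eR : EqOn (fun y : ℝ => -((y - x) ^ (-(2*s)) * y ^ (α - 1)))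
      (fun y => Real.sign (x - y) * |x - y| ^ (-(2 * s)) * y ^ (α - 1)) (Ico (x + ε) 1) := by
    intro y hy
    have : x - y < 0 := by linarith [hy.1]
    simp only [Real.sign_of_neg this, abs_of_neg this, neg_sub]
    ring
  have iL := intL (s := s) hα (b := x - ε) (x := x) (by linarith) (by linarith)
  have iR := intR (s := s) (α := α) (b := x + ε) hx (by linarith) (by linarith)
  rw [intervalIntegrable_iff_integrableOn_Ioc_of_le (by linarith)] at iL
  rw [intervalIntegrable_iff_integrableOn_Icc_of_le (by linarith)] at iR
  have iR' := (iR.mono_set Ico_subset_Icc_self).neg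
  rw [hset, setIntegral_union ?_ measurableSet_Ico ?_ ?_]
  · rw [← setIntegral_congr_fun measurableSet_Ioc eL, ← setIntegral_congr_fun measurableSet_Ico eR,
      integral_neg, TT, intervalIntegral.integral_of_le (by linarith),
      intervalIntegral.integral_of_le (by linarith), integral_Ico_eq_integral_Ioo,
      integral_Ioc_eq_integral_Ioo (x := x + ε)]
    ring
  · rw [Set.disjoint_left]
    intro y h1 h2
    linarith [h1.2, h2.1]
  · exact iL.congr_fun eL measurableSet_Ioc
  · exact iR'.congr_fun eR measurableSet_Ico

lemma npv_iff {s α x L : ℝ} (hα : 0 < α) (hx : x ∈ Ioo (0:ℝ) 1) :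
    Npv s α x L ↔ Tendsto (TT s α x) (nhdsWithin 0 (Ioi 0)) (nhds L) := by
  unfold Npv
  apply tendsto_congr'
  have h0 : (0:ℝ) < min x (1 - x) := lt_min hx.1 (by linarith [hx.2])
  filter_upwards [Ioo_mem_nhdsGT h0] with ε he
  exact split_int hα hx.1 he.1 (he.2.trans_le (min_le_left _ _)) (he.2.trans_le (min_le_right _ _))

lemma TT_rec {s α x ε : ℝ} (hα : 0 < α) (hx : 0 < x) (he : 0 < ε) (hex : ε < x)
    (hex1 : ε < 1 - x) :
    α * x * TT s α x ε - (α + 1 - 2 * s) * TT s (α + 1) x ε =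
      ε ^ (1 - 2*s) * ((x - ε) ^ α - (x + ε) ^ α) + (1 - x) ^ (1 - 2*s) := by
  have iL := intL (s := s) hα (b := x - ε) (x := x) (by linarith) (by linarith)
  have iL' := intL (s := s) (α := α + 1) (by linarith) (b := x - ε) (x := x) (by linarith) (by linarith)
  have iR := intR (s := s) (α := α) (b := x + ε) hx (by linarith) (by linarith)
  have iR' := intR (s := s) (α := α + 1) (b := x + ε) hx (by linarith) (by linarith)
  have hL := intervalIntegral.integral_eq_sub_of_hasDerivAt_of_le (a := 0) (b := x - ε) (by linarith)
    (f := fun y => (x - y) ^ (1 - 2*s) * y ^ α)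
    (f' := fun y => α * x * ((x - y) ^ (-(2*s)) * y ^ (α - 1))
      - (α + 1 - 2 * s) * ((x - y) ^ (-(2*s)) * y ^ (α + 1 - 1))) ?_ ?_
      ((iL.const_mul _).sub (iL'.const_mul _))
  have hR := intervalIntegral.integral_eq_sub_of_hasDerivAt_of_le (a := x + ε) (b := 1) (by linarith)
    (f := fun y => -((y - x) ^ (1 - 2*s) * y ^ α))
    (f' := fun y => α * x * ((y - x) ^ (-(2*s)) * y ^ (α - 1))
      - (α + 1 - 2 * s) * ((y - x) ^ (-(2*s)) * y ^ (α + 1 - 1))) ?_ ?_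
      ((iR.const_mul _).sub (iR'.const_mul _))
  · rw [intervalIntegral.integral_sub (iL.const_mul _) (iL'.const_mul _),
      intervalIntegral.integral_const_mul, intervalIntegral.integral_const_mul] at hL
    rw [intervalIntegral.integral_sub (iR.const_mul _) (iR'.const_mul _),
      intervalIntegral.integral_const_mul, intervalIntegral.integral_const_mul] at hR
    rw [Real.zero_rpow hα.ne', show x - (x - ε) = ε by ring] at hL
    rw [Real.one_rpow, show x + ε - x = ε by ring] at hR
    unfold TT
    linear_combination hL - hR
  · refine ContinuousOn.neg (ContinuousOn.mul
      (ContinuousOn.rpow_const (by fun_prop) fun y hy => Or.inl ?_)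
      (ContinuousOn.rpow_const (by fun_prop) fun y hy => Or.inl ?_))
    · linarith [hy.1]
    · linarith [hy.1]
  · intro y hy
    have h1 : 0 < y - x := by linarith [hy.1]
    have h2 : 0 < y := by linarith
    have d1 := ((hasDerivAt_id y).sub_const x).rpow_const (p := 1 - 2*s) (Or.inl h1.ne')
    have d2 := (hasDerivAt_id y).rpow_const (p := α) (Or.inl h2.ne')
    convert! (d1.mul d2).neg using 1
    simp only [id]
    rw [show 1 - 2*s - 1 = -(2*s) by ring, show 1 - 2*s = -(2*s) + 1 by ring,
      Real.rpow_add_one h1.ne', show α + 1 - 1 = (α - 1) + 1 by ring, Real.rpow_add_one h2.ne',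
      show y ^ α = y ^ (α - 1) * y by rw [← Real.rpow_add_one h2.ne']; simp]
    ring
  · refine ContinuousOn.mul
      (ContinuousOn.rpow_const (by fun_prop) fun y hy => Or.inl ?_)
      (ContinuousOn.rpow_const (by fun_prop) fun y hy => Or.inr hα.le)
    linarith [hy.2]
  · intro y hy
    have h1 : 0 < x - y := by linarith [hy.2]
    have h2 : 0 < y := hy.1
    have d1 := ((hasDerivAt_id y).const_sub x).rpow_const (p := 1 - 2*s) (Or.inl h1.ne')
    have d2 := (hasDerivAt_id y).rpow_const (p := α) (Or.inl h2.ne')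
    convert! (d1.mul d2) using 1
    simp only [id]
    rw [show 1 - 2*s - 1 = -(2*s) by ring, show 1 - 2*s = -(2*s) + 1 by ring,
      Real.rpow_add_one h1.ne', show α + 1 - 1 = (α - 1) + 1 by ring, Real.rpow_add_one h2.ne',
      show y ^ α = y ^ (α - 1) * y by rw [← Real.rpow_add_one h2.ne']; simp]
    ring

lemma rpow_small {p : ℝ} (hp : 0 < p) :
    Tendsto (fun ε : ℝ => ε ^ p) (nhdsWithin 0 (Ioi 0)) (nhds 0) := by
  have := (Real.continuousAt_rpow_const 0 p (Or.inr hp.le)).tendsto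
  rw [Real.zero_rpow hp.ne'] at this
  exact this.mono_left nhdsWithin_le_nhds

lemma bdry {s α x : ℝ} (hs : s < 1) (hx : 0 < x) :
    Tendsto (fun ε : ℝ => ε ^ (1 - 2*s) * ((x - ε) ^ α - (x + ε) ^ α))
      (nhdsWithin 0 (Ioi 0)) (nhds 0) := by
  have d1 := ((hasDerivAt_id (0:ℝ)).const_sub x).rpow_const (p := α) (Or.inl (by simp [hx.ne']))
  have d2 := ((hasDerivAt_id (0:ℝ)).const_add x).rpow_const (p := α) (Or.inl (by simp [hx.ne']))
  have d := hasDerivAt_iff_tendsto_slope_zero.1 (d1.sub d2)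
  have d' := d.mono_left (nhdsWithin_mono 0 (fun y (hy : 0 < y) => hy.ne') :
    nhdsWithin 0 (Ioi (0:ℝ)) ≤ _)
  have := (rpow_small (p := 2 - 2*s) (by linarith)).mul d'
  rw [zero_mul] at this
  refine this.congr' ?_
  filter_upwards [self_mem_nhdsWithin] with ε he
  have he : 0 < ε := he
  simp only [Pi.sub_apply, id, zero_add, smul_eq_mul, sub_zero, add_zero, sub_self]
  rw [show 2 - 2*s = (1 - 2*s) + 1 by ring, Real.rpow_add_one he.ne']
  field_simp

lemma npv_step {s : ℝ} (hs : s ∈ Set.Ioo (0 : ℝ) 1) (n : ℕ) {x : ℝ} (hx : x ∈ Set.Ioo (0:ℝ) 1)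
    (h : Npv s (s + n) x (∑' k : ℕ, NsCoeff s n k * x ^ k)) :
    Npv s (s + (n+1 : ℕ)) x (∑' k : ℕ, NsCoeff s (n+1) k * x ^ k) := by
  have hα : 0 < s + n := by have := hs.1; positivity
  have hβ : 0 < s + (n+1 : ℕ) := by have := hs.1; positivity
  rw [npv_iff hα hx] at h
  rw [npv_iff hβ hx]
  have hne : (n + 1 - s : ℝ) ≠ 0 := by
    have := hs.2
    have : (0:ℝ) ≤ n := by positivity
    linarith
  have key := (((h.const_mul ((s + n) * x)).sub
    ((bdry (s := s) (α := s + n) hs.2 hx.1).add_const ((1 - x) ^ (1 - 2*s)))).div_const (n + 1 - s))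
  rw [zero_add, ← series_rec hs n hx, sub_sub_cancel, mul_div_cancel_left₀ _ hne] at key
  refine key.congr' ?_
  have h0 : (0:ℝ) < min x (1 - x) := lt_min hx.1 (by linarith [hx.2])
  filter_upwards [Ioo_mem_nhdsGT h0] with ε he
  have := TT_rec (s := s) hα hx.1 he.1 (he.2.trans_le (min_le_left _ _))
    (he.2.trans_le (min_le_right _ _))
  rw [series_rec hs n hx, ← this, sub_sub_cancel, show s + n + 1 - 2*s = n + 1 - s by ring,
    mul_div_cancel_left₀ _ hne]
  push_cast
  rw [add_assoc]


lemma gcont {s x : ℝ} : ContinuousOn (fun w : ℝ => (x - w) ^ (-(2*s)) * w ^ (s - 1)) (Ioo 0 x) := by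
  refine ContinuousOn.mul (ContinuousOn.rpow_const (by fun_prop) fun y hy => Or.inl ?_)
    (ContinuousOn.rpow_const (by fun_prop) fun y hy => Or.inl ?_)
  · have := hy.2
    linarith
  · exact hy.1.ne'

lemma inv_subst {s x ε : ℝ} (hx : x ∈ Ioo (0:ℝ) 1) (he : 0 < ε) (hex1 : ε < 1 - x) :
    ∫ y in (x + ε)..1, (y - x) ^ (-(2*s)) * y ^ (s - 1) =
      ∫ w in (x ^ 2)..(x ^ 2 / (x + ε)), (x - w) ^ (-(2*s)) * w ^ (s - 1) := by
  have hx0 := hx.1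
  have hu : uIcc (x + ε) 1 = Icc (x + ε) 1 := uIcc_of_le (by linarith)
  have h := intervalIntegral.integral_comp_mul_deriv' (a := x + ε) (b := 1)
    (f := fun y => x ^ 2 / y) (f' := fun y => -(x ^ 2 / y ^ 2))
    (g := fun w => (x - w) ^ (-(2*s)) * w ^ (s - 1)) ?_ ?_ ?_
  · rw [intervalIntegral.integral_symm (x ^ 2 / (x + ε)) (x ^ 2)]
    simp only [div_one] at h
    rw [← h, ← intervalIntegral.integral_neg]
    apply intervalIntegral.integral_congr
    rw [hu]
    intro y hy
    have h1 : 0 < y - x := by linarith [hy.1]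
    have h2 : 0 < y := by linarith
    simp only [Function.comp]
    rw [show x - x ^ 2 / y = x * (y - x) / y by field_simp,
      Real.div_rpow (by positivity) h2.le, Real.mul_rpow hx0.le h1.le,
      Real.div_rpow (by positivity) h2.le, ← Real.rpow_natCast x 2, ← Real.rpow_mul hx0.le,
      Real.rpow_neg h2.le]
    have e1 : x ^ (((2:ℕ):ℝ) * (s - 1)) = x ^ (2*s) / x ^ 2 := by
      rw [show ((2:ℕ):ℝ) * (s - 1) = 2*s - (2:ℕ) by push_cast; ring, Real.rpow_sub hx0,
        Real.rpow_natCast]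
    have e2 : y ^ (s - 1) = y ^ s / y := by rw [Real.rpow_sub_one h2.ne']
    have e3 : y ^ (2*s) = y ^ s * y ^ s := by rw [← Real.rpow_add h2]; ring_nf
    rw [e1, e2, e3, Real.rpow_natCast, Real.rpow_neg hx0.le]
    have : 0 < x ^ (2*s) := Real.rpow_pos_of_pos hx0 _
    have : 0 < y ^ s := Real.rpow_pos_of_pos h2 _
    field_simp
  · rw [hu]
    intro y hy
    have h2 : y ≠ 0 := by linarith [hy.1]
    have := (hasDerivAt_inv h2).const_mul (x ^ 2)
    convert! this using 1
    field_simp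
  · rw [hu]
    refine ContinuousOn.neg (ContinuousOn.div (by fun_prop) (by fun_prop) fun y hy => ?_)
    have : 0 < y := by linarith [hy.1]
    positivity
  · refine gcont.mono ?_
    rw [hu]
    rintro _ ⟨y, hy, rfl⟩
    have : 0 < y := by linarith [hy.1]
    refine ⟨by positivity, ?_⟩
    simp only
    rw [div_lt_iff₀ this]
    nlinarith [hy.1]

lemma base_sum {s : ℝ} (hs : s ∈ Set.Ioo (0 : ℝ) 1) {x : ℝ} (hx : x ∈ Set.Ioo (0:ℝ) 1) :
    ∫ w in (0:ℝ)..(x ^ 2), (x - w) ^ (-(2*s)) * w ^ (s - 1) = ∑' k : ℕ, NsCoeff s 0 k * x ^ k := by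
  have hx0 := hx.1
  have hs0 := hs.1
  have hx2 : (0:ℝ) ≤ x ^ 2 := by positivity
  have hrpow : ∀ k : ℕ, IntervalIntegrable (fun w : ℝ => w ^ (s - 1 + k)) volume 0 (x ^ 2) := fun k =>
    intervalIntegral.intervalIntegrable_rpow' (by have : (0:ℝ) ≤ k := by positivity
                                                  linarith)
  let F : ℕ → ℝ → ℝ := fun k w => (cc (2*s) k * x ^ (-(2*s)) / x ^ k) * w ^ (s - 1 + k)
  have hFi : ∀ k, Integrable (F k) (volume.restrict (Ioc 0 (x ^ 2))) := by
    intro k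
    have := hrpow k
    rw [intervalIntegrable_iff_integrableOn_Ioc_of_le hx2] at this
    exact this.const_mul _
  have hFI : ∀ k, ∫ w in Ioc 0 (x ^ 2), F k w = NsCoeff s 0 k * x ^ k := by
    intro k
    have hk : (0:ℝ) ≤ k := by positivity
    simp only [F]
    rw [integral_const_mul, ← intervalIntegral.integral_of_le hx2,
      integral_rpow (Or.inl (by linarith)), Real.zero_rpow (by linarith), NsCoeff_eq hs0,
      ← Real.rpow_natCast x 2, ← Real.rpow_mul hx0.le,
      show ((2:ℕ):ℝ) * (s - 1 + k + 1) = 2 * s + ((2 * k : ℕ):ℝ) by push_cast; ring,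
      Real.rpow_add hx0, Real.rpow_natCast, Real.rpow_neg hx0.le, pow_mul']
    have : 0 < x ^ (2*s) := Real.rpow_pos_of_pos hx0 _
    have h3 : s - 1 + k + 1 ≠ 0 := by linarith
    have h4 : s - ((0:ℕ):ℝ) + k = s - 1 + k + 1 := by push_cast; ring
    rw [h4]
    field_simp
    ring
  have hFn : ∀ k, ∫ w in Ioc 0 (x ^ 2), ‖F k w‖ = NsCoeff s 0 k * x ^ k := by
    intro k
    rw [← hFI k]
    refine setIntegral_congr_fun measurableSet_Ioc fun w hw => ?_
    have := cc_nonneg (a := 2*s) (by linarith) k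
    have hw0 : 0 < w := hw.1
    exact Real.norm_of_nonneg (by simp only [F]; positivity)
  have key := hasSum_integral_of_summable_integral_norm hFi
    (by simp only [hFn]; exact summable_real hs 0 hx)
  simp only [hFI] at key
  rw [key.tsum_eq, intervalIntegral.integral_of_le hx2]
  refine setIntegral_congr_fun measurableSet_Ioc fun w hw => ?_
  have hw0 : 0 < w := hw.1
  have hwx : w / x < 1 := by
    rw [div_lt_one hx0]
    nlinarith [hw.2, hx.2]
  have h5 := ((hasSum_cc (2*s) (w/x) (by rwa [abs_of_pos (by positivity)])).mul_left
    (x ^ (-(2*s)))).mul_right (w ^ (s - 1))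
  rw [← Real.mul_rpow hx0.le (by linarith), show x * (1 - w/x) = x - w by field_simp] at h5
  rw [← h5.tsum_eq]
  congr 1
  ext k
  simp only [F]
  rw [Real.rpow_add hw0, Real.rpow_natCast, div_pow]
  field_simp

lemma base_err {s : ℝ} (hs : s ∈ Set.Ioo (0 : ℝ) 1) {x : ℝ} (hx : x ∈ Set.Ioo (0:ℝ) 1) :
    Tendsto (fun ε : ℝ => ∫ w in (x - ε)..(x ^ 2 / (x + ε)), (x - w) ^ (-(2*s)) * w ^ (s - 1))
      (nhdsWithin 0 (Ioi 0)) (nhds 0) := by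
  have hx0 := hx.1
  have hs0 := hs.1
  have hs1 := hs.2
  have lim := (rpow_small (p := 2 - 2*s) (by linarith)).const_mul
    ((1/2 : ℝ) ^ (-(2*s)) * (x/2) ^ (s-1) / x)
  rw [mul_zero] at lim
  refine squeeze_zero_norm' ?_ lim
  filter_upwards [Ioo_mem_nhdsGT (show (0:ℝ) < x/2 by linarith)] with ε he
  obtain ⟨he0, he1⟩ := he
  have hxe : 0 < x + ε := by linarith
  have hlen : x ^ 2 / (x + ε) - (x - ε) = ε ^ 2 / (x + ε) := by field_simp; ring
  have hlen0 : 0 ≤ ε ^ 2 / (x + ε) := by positivity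
  have hb := intervalIntegral.norm_integral_le_of_norm_le_const (a := x - ε) (b := x ^ 2 / (x + ε))
    (f := fun w => (x - w) ^ (-(2*s)) * w ^ (s - 1)) (C := (ε/2) ^ (-(2*s)) * (x/2) ^ (s-1)) ?_
  · refine hb.trans ?_
    rw [hlen, abs_of_nonneg hlen0]
    have e1 : (ε/2) ^ (-(2*s)) = (1/2 : ℝ) ^ (-(2*s)) * ε ^ (-(2*s)) := by
      rw [← Real.mul_rpow (by norm_num) he0.le]; ring_nf
    have e2 : ε ^ (2 - 2*s) = ε ^ (-(2*s)) * ε ^ 2 := by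
      rw [← Real.rpow_natCast ε 2, ← Real.rpow_add he0]; push_cast; ring_nf
    have e3 : ε ^ 2 / (x + ε) ≤ ε ^ 2 / x := by
      gcongr
      linarith
    calc _ ≤ (ε/2) ^ (-(2*s)) * (x/2) ^ (s-1) * (ε ^ 2 / x) := by gcongr
      _ = _ := by rw [e1, e2]; ring
  · intro w hw
    rw [uIoc_of_le (by linarith)] at hw
    obtain ⟨h1, h2⟩ := hw
    have h3 : ε / 2 ≤ x - w := by
      have : x ^ 2 / (x + ε) ≤ x - ε / 2 := by
        rw [div_le_iff₀ hxe]
        nlinarith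
      linarith
    have h4 : x / 2 ≤ w := by linarith
    have h5 : 0 < x - w := by linarith
    have h6 : 0 < w := by linarith
    rw [Real.norm_of_nonneg (by positivity)]
    have a1 := Real.rpow_le_rpow_of_nonpos (by positivity) h3 (show -(2*s) ≤ 0 by linarith)
    have a2 := Real.rpow_le_rpow_of_nonpos (by positivity) h4 (show s - 1 ≤ 0 by linarith)
    gcongr

lemma npv_base {s : ℝ} (hs : s ∈ Set.Ioo (0 : ℝ) 1) {x : ℝ} (hx : x ∈ Set.Ioo (0:ℝ) 1) :
    Npv s (s + (0:ℕ)) x (∑' k : ℕ, NsCoeff s 0 k * x ^ k) := by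
  have hx0 := hx.1
  have hs0 := hs.1
  rw [show s + ((0:ℕ):ℝ) = s by simp, npv_iff hs0 hx, ← base_sum hs hx]
  have := (base_err hs hx).const_sub
    (∫ w in (0:ℝ)..(x ^ 2), (x - w) ^ (-(2*s)) * w ^ (s - 1))
  rw [sub_zero] at this
  refine this.congr' ?_
  have h0 : (0:ℝ) < min x (1 - x) := lt_min hx.1 (by linarith [hx.2])
  filter_upwards [Ioo_mem_nhdsGT h0] with ε he
  have h1 : 0 < ε := he.1
  have h2 : ε < x := he.2.trans_le (min_le_left _ _)
  have h3 : ε < 1 - x := he.2.trans_le (min_le_right _ _)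
  unfold TT
  rw [inv_subst hx h1 h3]
  have hlt : x ^ 2 / (x + ε) < x := by
    rw [div_lt_iff₀ (by linarith)]
    nlinarith
  have hpos : 0 < x ^ 2 / (x + ε) := by positivity
  have i1 := intL (s := s) hs0 (b := x ^ 2) (x := x) (by positivity) (by nlinarith [hx.2])
  have i2 := intL (s := s) hs0 (b := x - ε) (x := x) (by linarith) (by linarith)
  have i3 := intL (s := s) hs0 hpos hlt
  rw [← intervalIntegral.integral_interval_sub_left i3 i2,
    ← intervalIntegral.integral_interval_sub_left i3 i1]
  ring

theorem stmt5 (s : ℝ) (hs : s ∈ Set.Ioo (0 : ℝ) 1) (n : ℕ) :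
    (∀ z : ℂ, ‖z‖ < 1 → Summable (fun k : ℕ => ((NsCoeff s n k : ℝ) : ℂ) * z ^ k)) ∧
    DifferentiableOn ℂ (fun z : ℂ => ∑' k : ℕ, ((NsCoeff s n k : ℝ) : ℂ) * z ^ k)
      (Metric.ball 0 1) ∧
    ∀ x ∈ Set.Ioo (0 : ℝ) 1, Npv s (s + n) x (∑' k : ℕ, NsCoeff s n k * x ^ k) := by
  refine ⟨part1 hs n, part2 hs n, fun x hx => ?_⟩
  induction n with
  | zero => exact npv_base hs hx
  | succ n ih => exact npv_step hs n hx ih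
end
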